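/- arXiv:1810.09728 — 4 statements merged into one kernel-verified Lean document; each statement's English description precedes it below -/
import Mathlib

section
/- If G is a connected simple graph with n vertices and m ≤ (3n/2) - 4 edges, then the tree cover number of the complement of G is at most the maximum positive semidefinite nullity of the complement of G: T(complement(G)) ≤ M₊(complement(G)). -/
/-! The proof compares both sides with `n / 2`, where `n` and `m` count the vertices and edges of `G`.

*Lower bound on the nullity.* A tree has a faithful orthogonal representation in `ℝ³`
(`exists_tree_representation`), so the complement of a spanning tree of `G` carries a positive
semidefinite matrix of rank at most `3`. Removing the other `m - (n - 1)` edges of `G` costs rank one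
each (`exists_posSemidef_deleteEdges`), so `M₊(Gᶜ) ≥ 2n - m - 4 ≥ n / 2`. If `G` has a universal
vertex, a spanning star gives rank at most `1` instead of `3`, and `M₊(Gᶜ) ≥ n / 2 + 2`.

*Upper bound on the tree cover number.* A maximum matching of `Gᶜ` with `u` unmatched vertices gives
a tree cover by `(n + u) / 2` vertices and edges. Two vertices missed by a common maximum matching
have degree sum at least `n` in `G` (`IsMaxMatchingMap.card_le_degree_add_degree`). As `m` is only
about `3n / 2`, this forces `u ≤ 2` always, and `u ≤ 1` when `Gᶜ` has no isolated vertex, that is,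
when `G` has no universal vertex. In both cases `(n + u) / 2` is at most the bound on `M₊(Gᶜ)`; for
`u = 1` this uses that `n` is then odd, so that the integer `M₊(Gᶜ)` is at least `(n + 1) / 2`. -/

open SimpleGraph

/-- A tree cover of `G`: vertex-disjoint induced subtrees covering all vertices. -/
def IsTreeCover {V : Type} (G : SimpleGraph V) (C : Finset (Set V)) : Prop :=
  (∀ s ∈ C, (G.induce s).IsTree) ∧ (∀ v : V, ∃ s ∈ C, v ∈ s) ∧
    (C : Set (Set V)).PairwiseDisjoint id

/-- The tree cover number: minimum cardinality of a tree cover. -/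
noncomputable def treeCoverNumber {V : Type} (G : SimpleGraph V) : ℕ :=
  sInf {n | ∃ C : Finset (Set V), IsTreeCover G C ∧ C.card = n}
/-- The matrices of `S₊(G)`: real PSD matrices whose off-diagonal pattern matches `G`. -/
def SPlusSet {V : Type} (G : SimpleGraph V) [Fintype V] : Set (Matrix V V ℝ) :=
  {A | A.PosSemidef ∧ ∀ i j : V, i ≠ j → (A i j ≠ 0 ↔ G.Adj i j)}

/-- Maximum positive semidefinite nullity. -/
noncomputable def Mplus {V : Type} (G : SimpleGraph V) [Fintype V] : ℕ :=
  sSup {k | ∃ A ∈ SPlusSet G, Fintype.card V - A.rank = k}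

/-- Minimum positive semidefinite rank. -/
noncomputable def mrPlus {V : Type} (G : SimpleGraph V) [Fintype V] : ℕ :=
  sInf {k | ∃ A ∈ SPlusSet G, A.rank = k}

/-! ### Positive semidefinite matrices of small rank -/

theorem rank_add_vecMulVec_le {V : Type} [Fintype V] (A : Matrix V V ℝ) (w z : V → ℝ) :
    (A + Matrix.vecMulVec w z).rank ≤ A.rank + 1 := by
  refine le_trans ?_ (Nat.add_le_add_left (Matrix.rank_vecMulVec_le w z) A.rank)
  unfold Matrix.rank
  rw [Matrix.mulVecLin_add]
  exact (Submodule.finrank_mono (LinearMap.range_add_le _ _)).trans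
    (Submodule.finrank_add_le_finrank_add_finrank _ _)

/-- Deleting edges from `H` raises the positive semidefinite rank by at most one per edge: an entry
`c = B u v` is cancelled by adding the rank-one matrix `|c| (e_u - sgn(c) e_v)(e_u - sgn(c) e_v)ᵀ`.
-/
theorem exists_posSemidef_deleteEdges {V : Type} [Fintype V] [DecidableEq V]
    (H : SimpleGraph V) {A : Matrix V V ℝ} (hA : A ∈ SPlusSet H) (S : Finset (Sym2 V)) :
    ∃ B ∈ SPlusSet (H.deleteEdges S), B.rank ≤ A.rank + S.card := by
  induction S using Finset.induction_on with
  | empty => exact ⟨A, by simpa using hA, by simp⟩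
  | insert e S he ih =>
    obtain ⟨B, ⟨hB, hBp⟩, hr⟩ := ih
    rw [Finset.card_insert_of_notMem he]
    induction e using Sym2.ind with
    | _ u v =>
    obtain ⟨t, σ, ht, htσ⟩ : ∃ t σ : ℝ, 0 ≤ t ∧ t * σ = B u v := by
      rcases le_total 0 (B u v) with h | h
      · exact ⟨B u v, 1, h, by ring⟩
      · exact ⟨-B u v, -1, by linarith, by ring⟩
    by_cases huv : u = v
    · subst huv
      refine ⟨B, ⟨hB, fun i j hij => ?_⟩, by omega⟩
      rw [hBp i j hij]
      simp only [deleteEdges_adj, Finset.coe_insert, Set.mem_insert_iff]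
      have : s(i, j) ≠ s(u, u) := by
        intro h
        rw [Sym2.eq_iff] at h
        grind
      tauto
    · set w : V → ℝ := Pi.single u 1 - σ • Pi.single v 1 with hw
      have hBs : B v u = B u v := by simpa using hB.isHermitian.apply u v
      refine ⟨B + Matrix.vecMulVec (t • w) w, ⟨?_, fun i j hij => ?_⟩, ?_⟩
      · refine hB.add ?_
        rw [Matrix.smul_vecMulVec]
        simpa using (Matrix.posSemidef_vecMulVec_self_star w).smul ht
      · have h1 := hBp i j hij
        simp only [deleteEdges_adj, Finset.coe_insert, Set.mem_insert_iff, Sym2.eq_iff] at h1 ⊢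
        simp only [Matrix.add_apply, Matrix.vecMulVec_apply, hw, Pi.smul_apply, Pi.sub_apply,
          Pi.single_apply, smul_eq_mul]
        grind
      · have := rank_add_vecMulVec_le B (t • w) w
        omega

/-- A real vector subspace is not covered by finitely many subspaces none of which contains it. -/
theorem exists_mem_forall_notMem {E ι : Type} [AddCommGroup E] [Module ℝ E] [Finite ι]
    (P : Submodule ℝ E) (Q : ι → Submodule ℝ E) (h : ∀ i, ¬ P ≤ Q i) :
    ∃ x ∈ P, ∀ i, x ∉ Q i := by
  by_contra! hc
  have hcov : ⋃ i, ((Q i).comap P.subtype : Set P) = Set.univ := by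
    refine Set.eq_univ_of_forall fun x => ?_
    obtain ⟨i, hi⟩ := hc x x.2
    exact Set.mem_iUnion.2 ⟨i, hi⟩
  obtain ⟨i, hi⟩ := Subspace.exists_eq_top_of_iUnion_eq_univ hcov
  exact h i (Submodule.comap_subtype_eq_top.1 hi)

open Submodule in
/-- The vertices of a tree can be represented by nonzero vectors of `ℝ³`, pairwise non-parallel, that
are orthogonal exactly along the edges. The vector of a leaf is chosen generically in the plane
orthogonal to the vector of its neighbour; non-parallelism is what keeps each of the other
orthogonality conditions a proper subspace of this plane. -/
theorem exists_tree_representation (n : ℕ) : ∀ (V : Type) [Fintype V] (T : SimpleGraph V),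
    T.IsTree → Fintype.card V = n → ∃ x : V → EuclideanSpace ℝ (Fin 3),
      (∀ v, x v ≠ 0) ∧ (Function.Injective fun v => span ℝ {x v}) ∧
      ∀ u v, u ≠ v → (inner ℝ (x u) (x v) = 0 ↔ T.Adj u v) := by
  classical
  induction n with
  | zero =>
    intro V _ T hT h
    have := hT.connected.nonempty
    exact absurd h Fintype.card_ne_zero
  | succ n ih =>
    intro V _ T hT h
    rcases subsingleton_or_nontrivial V with hV | hV
    · refine ⟨fun _ => EuclideanSpace.single 0 1, fun v => by simp, fun u v _ => Subsingleton.elim u v,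
        fun u v huv => absurd (Subsingleton.elim u v) huv⟩
    obtain ⟨w, hw⟩ := hT.exists_vert_degree_one_of_nontrivial
    obtain ⟨p, hp, hpu⟩ := (degree_eq_one_iff_existsUnique_adj).1 hw
    have hT' : (T.induce {w}ᶜ).IsTree :=
      ⟨hT.connected.induce_compl_singleton_of_degree_eq_one hw, hT.isAcyclic.induce _⟩
    obtain ⟨x, hx0, hxi, hxa⟩ := ih _ _ hT' (by
      rw [Fintype.card_compl_set, h]; simp)
    have hpw : p ∈ ({w}ᶜ : Set V) := hp.ne'
    set p' : ({w}ᶜ : Set V) := ⟨p, hpw⟩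
    have : Fact (Module.finrank ℝ (EuclideanSpace ℝ (Fin 3)) = 2 + 1) := ⟨by simp⟩
    have hfr : ∀ u, Module.finrank ℝ (span ℝ {x u})ᗮ = 2 := fun u =>
      finrank_orthogonal_span_singleton (hx0 u)
    -- `none` makes `y` nonzero, `inl` makes it parallel to no `x u`, and `inr` keeps it from being
    -- orthogonal to `x u` for `u ≠ p`.
    obtain ⟨y, hyp, hy⟩ := exists_mem_forall_notMem (span ℝ {x p'})ᗮ
      (fun i : Option (({w}ᶜ : Set V) ⊕ {u : ({w}ᶜ : Set V) // u ≠ p'}) => match i with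
        | none => ⊥
        | some (.inl u) => span ℝ {x u}
        | some (.inr u) => (span ℝ {x u})ᗮ) (by
      rintro (_ | u | u) hle
      · have := finrank_mono hle
        rw [hfr] at this
        simp at this
      · have := finrank_mono hle
        rw [hfr, finrank_span_singleton (hx0 u)] at this
        omega
      · have h1 := eq_of_le_of_finrank_eq hle (by rw [hfr, hfr])
        have h2 := congrArg (fun K : Submodule ℝ (EuclideanSpace ℝ (Fin 3)) => Kᗮ) h1
        simp only [orthogonal_orthogonal] at h2
        exact u.2 (hxi h2.symm))
    have hy0 : y ≠ 0 := hy none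
    have hys : ∀ u, y ∉ span ℝ {x u} := fun u => hy (some (.inl u))
    have hyo : ∀ u, inner ℝ (x u) y = 0 ↔ T.Adj w u := by
      intro u
      rw [← mem_orthogonal_singleton_iff_inner_right]
      constructor
      · intro hu
        by_cases hup : u = p'
        · rw [hup]; exact hp
        · exact absurd hu (hy (some (.inr ⟨u, hup⟩)))
      · intro hu
        have : u = p' := Subtype.ext (hpu _ hu)
        rw [this]; exact hyp
    refine ⟨fun v => if hv : v = w then y else x ⟨v, hv⟩, ?_, ?_, ?_⟩
    · intro v
      by_cases hv : v = w
      · simpa [hv] using hy0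
      · simpa [hv] using hx0 _
    · have key : ∀ u, span ℝ {y} ≠ span ℝ {x u} := fun u hu =>
        hys u (hu ▸ mem_span_singleton_self y)
      intro u v huv
      by_cases hu : u = w <;> by_cases hv : v = w
      · rw [hu, hv]
      · simp only [hu, hv, dite_true, dite_false] at huv
        exact absurd huv (key _)
      · simp only [hu, hv, dite_true, dite_false] at huv
        exact absurd huv.symm (key _)
      · simp only [hu, hv, dite_false] at huv
        exact congrArg Subtype.val (hxi huv)
    · intro u v huv
      by_cases hu : u = w <;> by_cases hv : v = w
      · exact absurd (hu.trans hv.symm) huv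
      · simp only [hu, hv, dite_true, dite_false]
        rw [real_inner_comm, hyo]
      · simp only [hu, hv, dite_true, dite_false]
        rw [hyo, T.adj_comm]
      · simp only [hu, hv, dite_false]
        rw [hxa _ _ (fun h => huv (congrArg Subtype.val h))]
        simp

theorem exists_mem_SPlusSet_compl_tree {V : Type} [Fintype V] {T : SimpleGraph V} (hT : T.IsTree) :
    ∃ A ∈ SPlusSet Tᶜ, A.rank ≤ 3 := by
  obtain ⟨x, -, -, hx⟩ := exists_tree_representation _ V T hT rfl
  set X : Matrix V (Fin 3) ℝ := Matrix.of fun v k => x v k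
  refine ⟨X * X.conjTranspose, ⟨Matrix.posSemidef_self_mul_conjTranspose X, fun i j hij => ?_⟩,
    (Matrix.rank_mul_le_left _ _).trans (by simpa using X.rank_le_card_width)⟩
  have : (X * X.conjTranspose) i j = inner ℝ (x i) (x j) := by
    simp [X, Matrix.mul_apply, PiLp.inner_apply, mul_comm]
  rw [this, Ne, hx i j hij, compl_adj]
  tauto

theorem le_Mplus {V : Type} [Fintype V] {H : SimpleGraph V} {A : Matrix V V ℝ}
    (hA : A ∈ SPlusSet H) : Fintype.card V - A.rank ≤ Mplus H :=
  le_csSup ⟨Fintype.card V, by rintro _ ⟨B, -, rfl⟩; omega⟩ ⟨A, hA, rfl⟩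

/-- The bound `M₊(Gᶜ) ≥ 2n - m - 4` for connected `G`: the complement of a spanning tree has nullity
at least `n - 3`, and `Gᶜ` is obtained from it by deleting `m - (n - 1)` edges. -/
theorem card_sub_le_Mplus_compl {V : Type} [Fintype V] [DecidableEq V] {G : SimpleGraph V}
    [DecidableRel G.Adj] (hG : G.Connected) :
    2 * Fintype.card V ≤ Mplus Gᶜ + G.edgeFinset.card + 4 := by
  classical
  obtain ⟨T, hTG, hT⟩ := hG.exists_isTree_le
  obtain ⟨A, hA, hAr⟩ := exists_mem_SPlusSet_compl_tree hT
  obtain ⟨B, hB, hBr⟩ := exists_posSemidef_deleteEdges _ hA (G.edgeFinset \ T.edgeFinset)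
  have heq : Tᶜ.deleteEdges ↑(G.edgeFinset \ T.edgeFinset) = Gᶜ := by
    ext u v
    have := @hTG u v
    simp
    tauto
  rw [heq] at hB
  have h1 := le_Mplus hB
  have h2 := hT.card_edgeFinset
  have h3 : T.edgeFinset ⊆ G.edgeFinset := edgeFinset_mono hTG
  have h4 := Finset.card_sdiff_add_card_eq_card h3
  omega

/-- If `G` has a vertex `c` adjacent to all the others, then `M₊(Gᶜ) ≥ 2n - m - 2`: the complement of
the spanning star at `c` is a clique plus an isolated vertex, which has positive semidefinite rank
at most `1`. -/
theorem card_sub_le_Mplus_compl_of_universal {V : Type} [Fintype V] [DecidableEq V]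
    {G : SimpleGraph V} [DecidableRel G.Adj] {c : V} (hc : ∀ v, v ≠ c → G.Adj c v) :
    2 * Fintype.card V ≤ Mplus Gᶜ + G.edgeFinset.card + 2 := by
  classical
  set w : V → ℝ := fun v => if v = c then 0 else 1 with hw
  set S : Finset (Sym2 V) := (Finset.univ.erase c).image fun v => s(c, v) with hS
  have hSc : S.card + 1 = Fintype.card V := by
    rw [hS, Finset.card_image_of_injective _ (fun u v h => by simp only [Sym2.eq_iff] at h; grind),
      Finset.card_erase_add_one (Finset.mem_univ c), Finset.card_univ]
  have hSG : S ⊆ G.edgeFinset := by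
    intro e he
    obtain ⟨v, hv, rfl⟩ := Finset.mem_image.1 he
    simpa using hc v (by simpa using hv)
  have hA : Matrix.vecMulVec w w ∈ SPlusSet (fromEdgeSet (S : Set (Sym2 V)))ᶜ := by
    refine ⟨by simpa using Matrix.posSemidef_vecMulVec_self_star w, fun i j hij => ?_⟩
    have hmem : s(i, j) ∈ S ↔ i = c ∨ j = c := by
      simp only [hS, Finset.mem_image, Finset.mem_erase, Finset.mem_univ, and_true, Sym2.eq_iff]
      constructor
      · grind
      · rintro (rfl | rfl)
        · exact ⟨j, hij.symm, by simp⟩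
        · exact ⟨i, hij, by simp⟩
    rw [compl_adj, fromEdgeSet_adj, Finset.mem_coe, hmem]
    by_cases hi : i = c <;> by_cases hj : j = c <;> simp [Matrix.vecMulVec_apply, hw, hi, hj] <;>
      grind
  obtain ⟨B, hB, hBr⟩ := exists_posSemidef_deleteEdges _ hA (G.edgeFinset \ S)
  have heq : ((fromEdgeSet (S : Set (Sym2 V)))ᶜ).deleteEdges ↑(G.edgeFinset \ S) = Gᶜ := by
    ext u v
    have : s(u, v) ∈ S → G.Adj u v := fun h => by simpa using hSG h
    simp
    tauto
  rw [heq] at hB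
  have h1 := le_Mplus hB
  have h2 := Matrix.rank_vecMulVec_le w w
  have h4 := Finset.card_sdiff_add_card_eq_card hSG
  omega

/-! ### Maximum matchings of the complement -/

/-- A matching of `H`, encoded as the involution that exchanges the ends of each matching edge and
fixes the unmatched vertices. -/
def IsMatchingMap {V : Type} (H : SimpleGraph V) (f : V → V) : Prop :=
  (∀ v, f (f v) = v) ∧ ∀ v, f v ≠ v → H.Adj v (f v)

/-- The fixed points of `f`; for a matching map, the unmatched vertices. -/
def fixedFinset {V : Type} [Fintype V] [DecidableEq V] (f : V → V) : Finset V :=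
  Finset.univ.filter fun v => f v = v

/-- A maximum matching: a matching map with the fewest fixed points. -/
def IsMaxMatchingMap {V : Type} [Fintype V] [DecidableEq V] (H : SimpleGraph V) (f : V → V) :
    Prop :=
  IsMatchingMap H f ∧ ∀ g, IsMatchingMap H g → (fixedFinset f).card ≤ (fixedFinset g).card

section Matching

variable {V : Type} [Fintype V] [DecidableEq V] {H : SimpleGraph V} {f : V → V}

theorem exists_isMaxMatchingMap (H : SimpleGraph V) : ∃ f, IsMaxMatchingMap H f := by
  obtain ⟨f, hf, hmin⟩ := exists_minimalFor_of_wellFoundedLT (IsMatchingMap H)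
    (fun f => (fixedFinset f).card) ⟨id, fun _ => rfl, fun v hv => absurd rfl hv⟩
  refine ⟨f, hf, fun g hg => ?_⟩
  rcases le_total (fixedFinset f).card (fixedFinset g).card with h | h
  · exact h
  · exact hmin hg h

theorem IsMaxMatchingMap.not_adj (hf : IsMaxMatchingMap H f) {a b : V} (ha : f a = a)
    (hb : f b = b) : ¬ H.Adj a b := by
  intro hab
  obtain ⟨⟨hi, hadj⟩, hmin⟩ := hf
  have hne := hab.ne
  have := hmin (fun v => if v = a then b else if v = b then a else f v)
    ⟨fun v => by grind, fun v => by have := hab.symm; grind⟩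
  have hlt : (fixedFinset fun v => if v = a then b else if v = b then a else f v).card <
      (fixedFinset f).card := by
    refine Finset.card_lt_card (Finset.ssubset_iff_of_subset ?_ |>.2 ⟨a, ?_, ?_⟩)
    · intro v
      simp only [fixedFinset, Finset.mem_filter, Finset.mem_univ, true_and]
      grind
    · simpa [fixedFinset] using ha
    · simpa [fixedFinset] using hne.symm
  omega

/-- If `a` is unmatched by `f` and adjacent to `x`, matching `a` to `x` instead of `f x` to `x` gives
another maximum matching, which leaves `f x` unmatched. -/
theorem IsMaxMatchingMap.exists_slide (hf : IsMaxMatchingMap H f) {a x : V} (ha : f a = a)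
    (hax : H.Adj a x) :
    f x ≠ x ∧ ∃ g, IsMaxMatchingMap H g ∧ g (f x) = f x ∧
      ∀ v, v ≠ a → v ≠ x → v ≠ f x → g v = f v := by
  have hx : f x ≠ x := fun hx => hf.not_adj ha hx hax
  refine ⟨hx, ?_⟩
  obtain ⟨⟨hi, hadj⟩, hmin⟩ := hf
  have hne := hax.ne
  have hxi := hi x
  set g : V → V := fun v => if v = a then x else if v = x then a else if v = f x then f x else f v
    with hg
  have hfix : (fixedFinset g).card = (fixedFinset f).card := by
    have h1 : fixedFinset g = insert (f x) ((fixedFinset f).erase a) := by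
      ext v
      simp only [fixedFinset, Finset.mem_filter, Finset.mem_univ, true_and, Finset.mem_insert,
        Finset.mem_erase, hg]
      grind
    rw [h1, Finset.card_insert_of_notMem, Finset.card_erase_add_one]
    · simpa [fixedFinset] using ha
    · simp only [fixedFinset, Finset.mem_filter, Finset.mem_univ, true_and, Finset.mem_erase]
      grind
  refine ⟨g, ⟨⟨fun v => ?_, fun v => ?_⟩, fun g' hg' => hfix ▸ hmin g' hg'⟩, ?_, ?_⟩
  · have := hi v
    grind
  · have := hax.symm
    grind
  · grind
  · grind

/-- A maximum matching has no augmenting path `a, x, f x, b` of length three. -/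
theorem IsMaxMatchingMap.not_augment (hf : IsMaxMatchingMap H f) {a b x : V} (ha : f a = a)
    (hb : f b = b) (hab : a ≠ b) (hax : H.Adj a x) : ¬ H.Adj b (f x) := by
  intro hbx
  obtain ⟨hx, g, hg, hgx, hgv⟩ := hf.exists_slide ha hax
  have hi := hf.1.1 x
  refine hg.not_adj (a := b) (b := f x) ?_ hgx hbx
  rw [hgv b hab.symm (by grind) (by grind), hb]

/-- If a maximum matching of `Gᶜ` misses both `a` and `b`, then `deg a + deg b ≥ n` in `G`: without
augmenting paths, every vertex `v` satisfies `v ∈ N(a)` or `f v ∈ N(b)`. -/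
theorem IsMaxMatchingMap.card_le_degree_add_degree {G : SimpleGraph V} [DecidableRel G.Adj]
    (hf : IsMaxMatchingMap Gᶜ f) {a b : V} (ha : f a = a) (hb : f b = b) (hab : a ≠ b) :
    Fintype.card V ≤ G.degree a + G.degree b := by
  have hinj : Function.Injective f := fun u v h => by rw [← hf.1.1 u, h, hf.1.1]
  have hcov : (Finset.univ : Finset V) ⊆ G.neighborFinset a ∪ (G.neighborFinset b).image f := by
    intro v _
    have h1 := hf.not_adj ha hb
    have h2 := hf.not_augment ha hb hab (x := v)
    have h3 := hf.1.1 v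
    have h4 := G.adj_comm a b
    simp only [compl_adj, Finset.mem_union, mem_neighborFinset, Finset.mem_image] at h1 h2 ⊢
    by_contra! h
    have := h.2 (f v)
    grind
  calc Fintype.card V = (Finset.univ : Finset V).card := rfl
    _ ≤ _ := Finset.card_le_card hcov
    _ ≤ _ := Finset.card_union_le _ _
    _ ≤ _ := by
      rw [Finset.card_image_of_injective _ hinj, card_neighborFinset_eq_degree,
        card_neighborFinset_eq_degree]

/-- Summing degrees over `S` counts an edge twice only when both its ends lie in `S`. -/
theorem sum_degree_le (G : SimpleGraph V) [DecidableRel G.Adj] (S : Finset V) :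
    ∑ v ∈ S, G.degree v ≤ G.edgeFinset.card + S.card.choose 2 := by
  suffices h : ∑ v ∈ S, G.degree v ≤
      (S.biUnion fun v => G.incidenceFinset v).card + S.card.choose 2 by
    refine h.trans (Nat.add_le_add_right (Finset.card_le_card ?_) _)
    exact Finset.biUnion_subset.2 fun v _ => G.incidenceFinset_subset v
  induction S using Finset.induction_on with
  | empty => simp
  | insert v S hv ih =>
    have h1 : (G.incidenceFinset v ∩ S.biUnion fun v => G.incidenceFinset v).card ≤ S.card := by
      rw [Finset.inter_biUnion]
      refine Finset.card_biUnion_le.trans ((Finset.sum_le_card_nsmul _ _ 1 ?_).trans (by simp))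
      intro u hu
      have huv : v ≠ u := fun h => hv (h ▸ hu)
      refine (Finset.card_le_card (t := {s(v, u)}) fun e he => ?_).trans (by simp)
      have := G.incidenceSet_inter_incidenceSet_subset huv
        (show e ∈ G.incidenceSet v ∩ G.incidenceSet u by simpa using he)
      simpa using this
    have h2 := Finset.card_union_add_card_inter (G.incidenceFinset v)
      (S.biUnion fun v => G.incidenceFinset v)
    have h3 : (S.card + 1).choose 2 = S.card + S.card.choose 2 := by
      rw [Nat.choose_succ_succ' S.card 1, Nat.choose_one_right]
    rw [Finset.sum_insert hv, Finset.biUnion_insert, Finset.card_insert_of_notMem hv, h3,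
      ← G.card_incidenceFinset_eq_degree v]
    omega

/-- Three unmatched vertices would have degree sum at least `3n/2` in `G`, hence would force
`m ≥ 3n/2 - 3`. -/
theorem IsMaxMatchingMap.card_fixed_le_two {G : SimpleGraph V} [DecidableRel G.Adj]
    (hf : IsMaxMatchingMap Gᶜ f) (hm : 2 * G.edgeFinset.card + 8 ≤ 3 * Fintype.card V) :
    (fixedFinset f).card ≤ 2 := by
  by_contra! h
  obtain ⟨a, ha, b, hb, c, hc, hab, hac, hbc⟩ := Finset.two_lt_card.1 h
  simp only [fixedFinset, Finset.mem_filter, Finset.mem_univ, true_and] at ha hb hc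
  have h1 := hf.card_le_degree_add_degree ha hb hab
  have h2 := hf.card_le_degree_add_degree ha hc hac
  have h3 := hf.card_le_degree_add_degree hb hc hbc
  have h4 := sum_degree_le G {a, b, c}
  rw [Finset.sum_insert (by simp [hab, hac]), Finset.sum_pair hbc,
    Finset.card_eq_three.2 ⟨a, b, c, hab, hac, hbc, rfl⟩] at h4
  norm_num [Nat.choose] at h4
  omega

/-- Suppose `a ≠ b` are unmatched, with `Gᶜ`-neighbours `x` and `z`. Sliding the matching along
`a x` and `b z` shows that other pairs among `a, b, f x, f z` are also missed by maximum matchings,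
so their degrees in `G` add up to at least `n` per pair, which is more than `m` allows. -/
theorem IsMaxMatchingMap.card_fixed_le_one {G : SimpleGraph V} [DecidableRel G.Adj]
    (hf : IsMaxMatchingMap Gᶜ f) (hm : 2 * G.edgeFinset.card + 8 ≤ 3 * Fintype.card V)
    (hn : 6 ≤ Fintype.card V) (hiso : ∀ a, ∃ x, Gᶜ.Adj a x) :
    (fixedFinset f).card ≤ 1 := by
  by_contra! h
  obtain ⟨a, ha, b, hb, hab⟩ := Finset.one_lt_card.1 h
  simp only [fixedFinset, Finset.mem_filter, Finset.mem_univ, true_and] at ha hb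
  obtain ⟨x, hax⟩ := hiso a
  obtain ⟨z, hbz⟩ := hiso b
  have hix := hf.1.1 x
  have hiz := hf.1.1 z
  have hab' := hf.not_adj ha hb
  have haug := hf.not_augment ha hb hab hax
  have hxa := hax.ne
  have hzb := hbz.ne
  obtain ⟨hx, g, hg, hgx, hgv⟩ := hf.exists_slide ha hax
  obtain ⟨hz, k, hk, hkz, hkv⟩ := hf.exists_slide hb hbz
  have hgb : g b = b := by
    rw [hgv b hab.symm (by grind) (by grind), hb]
  have h1 := hf.card_le_degree_add_degree ha hb hab
  -- If `x = z`, each two of the three vertices `a`, `b`, `f x` are missed by a maximum matching.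
  -- Otherwise `a, b` are missed by one maximum matching and `f x, f z` by another.
  by_cases hxz : x = z
  · subst hxz
    have hka : k a = a := by
      rw [hkv a hab (by grind) (by grind), ha]
    have hay : a ≠ f x := by grind
    have hby : b ≠ f x := by grind
    have h2 := hg.card_le_degree_add_degree hgb hgx hby
    have h3 := hk.card_le_degree_add_degree hka hkz hay
    have h4 := sum_degree_le G {a, b, f x}
    rw [Finset.sum_insert (by simp [hab, hay]), Finset.sum_pair hby,
      Finset.card_eq_three.2 ⟨a, b, f x, hab, hay, hby, rfl⟩] at h4
    norm_num [Nat.choose] at h4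
    omega
  · have hzy : z ≠ f x := fun h => haug (h ▸ hbz)
    have hza : z ≠ a := fun h => hab' (h ▸ hbz.symm)
    have hgz : g z = f z := hgv z hza (Ne.symm hxz) hzy
    obtain ⟨-, l, hl, hlz, hlv⟩ := hg.exists_slide hgb hbz
    rw [hgz] at hlz hlv
    have hay : a ≠ f x := by grind
    have hby : b ≠ f x := by grind
    have haw : a ≠ f z := by grind
    have hbw : b ≠ f z := by grind
    have hyw : f x ≠ f z := by grind
    have hly : l (f x) = f x := by
      rw [hlv (f x) hby.symm hzy.symm hyw, hgx]
    have h2 := hl.card_le_degree_add_degree hly hlz hyw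
    have h4 := sum_degree_le G {a, b, f x, f z}
    rw [Finset.sum_insert (by simp [hab, hay, haw]), Finset.sum_insert (by simp [hby, hbw]),
      Finset.sum_pair hyw, Finset.card_insert_of_notMem (by simp [hab, hay, haw]),
      Finset.card_eq_three.2 ⟨b, f x, f z, hby, hbw, hyw, rfl⟩] at h4
    norm_num [Nat.choose] at h4
    omega

/-- The edges of a matching and its unmatched vertices form a tree cover; with `u` unmatched vertices
it has `(n + u) / 2` members. -/
theorem IsMatchingMap.two_mul_treeCoverNumber_le (hf : IsMatchingMap H f) :
    2 * treeCoverNumber H ≤ Fintype.card V + (fixedFinset f).card := by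
  classical
  obtain ⟨hi, hadj⟩ := hf
  set p : V → Set V := fun v => {v, f v} with hp
  have hpp : ∀ u v, p u = p v ↔ u = v ∨ u = f v := by
    intro u v
    constructor
    · intro h
      have : u ∈ p v := h ▸ Set.mem_insert u _
      simpa [hp] using this
    · rintro (rfl | rfl)
      · rfl
      · simp [hp, hi, Set.pair_comm]
  -- Each matching edge occurs twice among the `p v`, and the image merges the two copies.
  set C := Finset.univ.image p with hC
  have hcover : IsTreeCover H C := by
    refine ⟨?_, fun v => ⟨p v, Finset.mem_image_of_mem p (Finset.mem_univ v), by simp [hp]⟩, ?_⟩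
    · intro s hs
      obtain ⟨v, -, rfl⟩ := Finset.mem_image.1 hs
      by_cases hv : f v = v
      · have : p v = {v} := by simp [hp, hv]
        rw [this]
        exact IsTree.of_subsingleton
      · refine ⟨induce_pair_connected_of_adj (hadj v hv), IsAcyclic.of_card_le_two ?_⟩
        exact (Set.encard_insert_le _ _).trans (by rw [Set.encard_singleton]; norm_num)
    · intro s hs t ht hst
      obtain ⟨u, -, rfl⟩ := Finset.mem_image.1 (Finset.mem_coe.1 hs)
      obtain ⟨v, -, rfl⟩ := Finset.mem_image.1 (Finset.mem_coe.1 ht)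
      refine Set.disjoint_left.2 fun w hw hw' => hst ?_
      have h1 : p w = p u := (hpp w u).2 (by simpa [hp] using hw)
      have h2 : p w = p v := (hpp w v).2 (by simpa [hp] using hw')
      exact h1.symm.trans h2
  have hT : treeCoverNumber H ≤ C.card := Nat.sInf_le ⟨C, hcover, rfl⟩
  have hsplit : C = (fixedFinset f).image p ∪ (fixedFinset f)ᶜ.image p := by
    rw [← Finset.image_union, Finset.union_compl]
  have h1 : C.card ≤ ((fixedFinset f).image p).card + ((fixedFinset f)ᶜ.image p).card :=
    hsplit ▸ Finset.card_union_le _ _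
  have h2 : ((fixedFinset f).image p).card ≤ (fixedFinset f).card := Finset.card_image_le
  have h3 : 2 * ((fixedFinset f)ᶜ.image p).card ≤ (fixedFinset f)ᶜ.card := by
    refine Finset.mul_card_image_le_card _ 2 fun s hs => ?_
    obtain ⟨v, hv, rfl⟩ := Finset.mem_image.1 hs
    have hv' : f v ≠ v := by simpa [fixedFinset] using hv
    rw [← Finset.card_pair hv']
    refine Finset.card_le_card fun u hu => ?_
    have := hi v
    simp only [Finset.mem_insert, Finset.mem_singleton] at hu
    simp only [fixedFinset, Finset.mem_filter, Finset.mem_compl, Finset.mem_univ, true_and, hpp]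
    grind
  have h4 := Finset.card_add_card_compl (fixedFinset f)
  omega

end Matching

/-! ### Conclusion -/

theorem stmt_3 {V : Type} [Fintype V] [DecidableEq V] (G : SimpleGraph V) [DecidableRel G.Adj]
    (hG : G.Connected)
    (hm : (G.edgeFinset.card : ℝ) ≤ 3 * (Fintype.card V : ℝ) / 2 - 4) :
    treeCoverNumber Gᶜ ≤ Mplus Gᶜ := by
  have hm' : 2 * G.edgeFinset.card + 8 ≤ 3 * Fintype.card V := by
    have : (2 * G.edgeFinset.card + 8 : ℝ) ≤ 3 * Fintype.card V := by linarith
    exact_mod_cast this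
  obtain ⟨f, hf⟩ := exists_isMaxMatchingMap Gᶜ
  have hT := hf.1.two_mul_treeCoverNumber_le
  by_cases hiso : ∀ a, ∃ x, Gᶜ.Adj a x
  · have hn : Fintype.card V ≤ G.edgeFinset.card + 1 := by
      have := hG.card_vert_le_card_edgeSet_add_one
      rwa [Nat.card_eq_fintype_card, Nat.card_eq_fintype_card, ← edgeFinset_card] at this
    have hM := card_sub_le_Mplus_compl hG
    have hu := hf.card_fixed_le_one hm' (by omega) hiso
    omega
  · push Not at hiso
    obtain ⟨c, hc⟩ := hiso
    have hM := card_sub_le_Mplus_compl_of_universal (G := G) (c := c) fun v hv => by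
      have := hc v
      rw [compl_adj] at this
      grind
    have hu := hf.card_fixed_le_two hm'
    omega
end

section
/- Let G be a connected simple graph on n ≥ 6 vertices with girth at least 5 (no cycles of length 3 or 4). Then the tree cover number satisfies T(G) ≤ n/3. -/
/-!
The bound is proved by strong induction over the vertex sets `W` inducing a connected subgraph,
with at least three vertices, of a graph all of whose cycles have length at least 5. Such a set
satisfies `3 T ≤ |W|` unless `|W| = 5`, when still `T ≤ 2` (the only exception is the 5-cycle);
this is `exists_cover`.

The induction step removes an induced tree `S` with at least three vertices whose complement `R`
in `W` is connected or empty (`exists_peel`). One takes `S` to be a minimal connected set of at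
least three vertices with connected or empty complement: if `v ∈ S` is attached to the complement
and `S` contained a cycle, then the component of `S \ {v}` containing the rest of that cycle
would be a smaller such set.

If `W` is a tree, one tree suffices. Otherwise `|W| ≥ 5`, since a cycle needs five vertices. If
`|R| ≤ 4`, then `R` is a tree for the same reason and two trees suffice; induction handles every
larger `R` except when `R` is a 5-cycle and `|S| = 3`. In that case a vertex `c` of the 5-cycle
adjacent to `S` is moved to `S`: now `S ∪ {c}` and `R \ {c}` are both
connected on four vertices, hence trees, and two trees cover eight vertices.
-/

open SimpleGraph

section TreeCover

variable {V : Type} {G : SimpleGraph V}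

/-- `C` is a family of pairwise disjoint induced subtrees of `G` with union exactly `W`. -/
def IsTreeCoverOn (G : SimpleGraph V) (W : Set V) (C : Finset (Set V)) : Prop :=
  (∀ s ∈ C, (G.induce s).IsTree) ∧ (∀ v : V, v ∈ W ↔ ∃ s ∈ C, v ∈ s) ∧
    (C : Set (Set V)).PairwiseDisjoint id

lemma IsTreeCoverOn.single {W : Set V} (h : (G.induce W).IsTree) : IsTreeCoverOn G W {W} := by
  refine ⟨?_, ?_, ?_⟩ <;> simp [h]

open Classical in
/-- A tree `S ⊆ W` and a tree cover of `W \ S` together form a tree cover of `W`. -/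
lemma IsTreeCoverOn.insert {W S : Set V} {C : Finset (Set V)} (hSW : S ⊆ W)
    (hS : (G.induce S).IsTree) (hC : IsTreeCoverOn G (W \ S) C) :
    IsTreeCoverOn G W (insert S C) := by
  obtain ⟨h1, h2, h3⟩ := hC
  refine ⟨?_, ?_, ?_⟩
  · intro s hs
    rcases Finset.mem_insert.1 hs with rfl | hs
    · exact hS
    · exact h1 s hs
  · intro v
    simp only [Finset.mem_insert, exists_eq_or_imp]
    rw [← h2 v]
    constructor
    · intro hv
      by_cases hvS : v ∈ S
      · exact Or.inl hvS
      · exact Or.inr ⟨hv, hvS⟩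
    · rintro (hv | hv)
      · exact hSW hv
      · exact hv.1
  · rw [Finset.coe_insert]
    refine h3.insert fun s hs _ => ?_
    refine Set.disjoint_left.2 fun x hx hxs => ?_
    exact ((h2 x).2 ⟨s, hs, hxs⟩).2 hx

/-- Two disjoint trees with union `W` give a cover of size at most two. -/
lemma exists_cover_pair {W S : Set V} (hSW : S ⊆ W) (hS : (G.induce S).IsTree)
    (hR : (G.induce (W \ S)).IsTree) : ∃ C, IsTreeCoverOn G W C ∧ C.card ≤ 2 := by
  classical
  exact ⟨_, (IsTreeCoverOn.single hR).insert hSW hS, Finset.card_le_two⟩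

lemma connected_insert_of_adj {A : Set V} {x y : V} (hA : (G.induce A).Connected) (hx : x ∈ A)
    (hxy : G.Adj x y) : (G.induce (insert y A)).Connected := by
  have h := induce_union_connected hA.preconnected
    (induce_pair_connected_of_adj hxy).preconnected ⟨x, hx, by simp⟩
  have e : A ∪ {x, y} = insert y A := by
    ext z
    simp only [Set.mem_union, Set.mem_insert_iff, Set.mem_singleton_iff]
    constructor
    · rintro (h | rfl | h) <;> tauto
    · tauto
  rwa [e] at h

lemma exists_crossing_edge {W : Set V} (hW : (G.induce W).Connected) {A : Set V} {a b : V}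
    (ha : a ∈ W) (haA : a ∈ A) (hb : b ∈ W) (hbA : b ∉ A) :
    ∃ x ∈ W, x ∈ A ∧ ∃ y ∈ W, y ∉ A ∧ G.Adj x y := by
  obtain ⟨p⟩ := hW.preconnected ⟨a, ha⟩ ⟨b, hb⟩
  obtain ⟨d, -, h1, h2⟩ := p.exists_boundary_dart {z | z.1 ∈ A} haA hbA
  exact ⟨d.fst.1, d.fst.2, h1, d.snd.1, d.snd.2, h2, d.adj⟩

/-- A cycle stays connected when one vertex is deleted. -/
lemma connected_cycle_diff {u : V} {p : G.Walk u u} (hp : p.IsCycle) (v : V) :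
    (G.induce ({x | x ∈ p.support} \ {v})).Connected := by
  classical
  by_cases hv : v ∈ p.support
  · have hq : (p.rotate v hv).IsCycle := (Walk.isCycle_rotate hv).2 hp
    have hs : ∀ x, x ∈ (p.rotate v hv).support ↔ x ∈ p.support := fun x =>
      p.mem_support_rotate_iff v hv
    generalize p.rotate v hv = q at hq hs
    cases q with
    | nil => exact absurd hq Walk.not_isCycle_nil
    | cons h q =>
      have hqp := ((Walk.cons_isCycle_iff _ _).1 hq).1.reverse
      have hs' : ∀ x, x ∈ p.support ↔ x = v ∨ x ∈ q.reverse.support := by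
        intro x; rw [← hs x]; simp
      generalize q.reverse = r at hqp hs'
      cases r with
      | nil => exact absurd h (G.irrefl)
      | cons h' r =>
        have hr := (Walk.cons_isPath_iff _ _).1 hqp
        have e : ({x | x ∈ p.support} \ {v} : Set V) = {x | x ∈ r.support} := by
          ext x
          simp only [Set.mem_sdiff, Set.mem_ofPred_eq, hs', Walk.support_cons, List.mem_cons,
            Set.mem_singleton_iff]
          constructor
          · tauto
          · intro hx
            exact ⟨by tauto, fun hxv => hr.2 (hxv ▸ hx)⟩
        rw [e]
        exact r.connected_induce_support
  · have e : ({x | x ∈ p.support} \ {v} : Set V) = {x | x ∈ p.support} :=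
      Set.sdiff_singleton_eq_self hv
    rw [e]
    exact p.connected_induce_support

lemma ncard_cycle_support {u : V} {p : G.Walk u u} (hp : p.IsCycle) :
    {x | x ∈ p.support}.ncard = p.length := by
  classical
  have e : {x | x ∈ p.support} = (p.support.tail.toFinset : Set V) := by
    ext x
    simp [Walk.mem_support_iff]
    rintro rfl
    exact Walk.end_mem_tail_support hp.not_nil
  rw [e, Set.ncard_coe_finset, List.toFinset_card_of_nodup hp.support_nodup]
  simp

/-- A connected set that is not a tree contains the vertex set `Z` of a cycle, hence at least
five vertices, and deleting any single vertex keeps `Z` connected. -/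
lemma exists_cycle_set (hg : 5 ≤ G.egirth) {W : Set V} (hW : (G.induce W).Connected)
    (hT : ¬ (G.induce W).IsTree) :
    ∃ Z ⊆ W, 5 ≤ Z.ncard ∧ ∀ v, (G.induce (Z \ {v})).Connected := by
  have hac : ¬ (G.induce W).IsAcyclic := fun h => hT ⟨hW, h⟩
  simp only [IsAcyclic, not_forall, not_not] at hac
  obtain ⟨u, p, hp⟩ := hac
  have hq : (p.map (Embedding.induce W).toHom).IsCycle :=
    hp.map (Embedding.induce (G := G) W).injective
  refine ⟨{x | x ∈ (p.map (Embedding.induce W).toHom).support}, ?_, ?_, connected_cycle_diff hq⟩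
  · intro x hx
    simp only [Walk.support_map, Set.mem_ofPred_eq, List.mem_map] at hx
    obtain ⟨y, -, rfl⟩ := hx
    exact y.2
  · rw [ncard_cycle_support hq]
    exact_mod_cast le_egirth.1 hg _ _ hq

variable [Finite V]

lemma isTree_of_ncard_le_four (hg : 5 ≤ G.egirth) {W : Set V} (hW : (G.induce W).Connected)
    (h4 : W.ncard ≤ 4) : (G.induce W).IsTree := by
  by_contra hT
  obtain ⟨Z, hZ, h5, -⟩ := exists_cycle_set hg hW hT
  have := Set.ncard_le_ncard hZ
  omega

/-- On five vertices a non-tree is a 5-cycle, so deleting a vertex leaves a tree. -/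
lemma isTree_diff_of_ncard_eq_five (hg : 5 ≤ G.egirth) {W : Set V}
    (hW : (G.induce W).Connected) (hT : ¬ (G.induce W).IsTree) (h5 : W.ncard = 5) {c : V}
    (hc : c ∈ W) : (G.induce (W \ {c})).IsTree := by
  obtain ⟨Z, hZ, hZ5, hZc⟩ := exists_cycle_set hg hW hT
  obtain rfl : Z = W := Set.eq_of_subset_of_ncard_le hZ (by omega)
  refine isTree_of_ncard_le_four hg (hZc c) ?_
  have := Set.ncard_sdiff_singleton_add_one hc
  omega

/-- A connected set has an induced subtree with at least three vertices and connected or empty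
complement. -/
lemma exists_peel (hg : 5 ≤ G.egirth) {W : Set V} (hW : (G.induce W).Connected)
    (h3 : 3 ≤ W.ncard) :
    ∃ S ⊆ W, 3 ≤ S.ncard ∧ (G.induce S).IsTree ∧
      (W \ S = ∅ ∨ (G.induce (W \ S)).Connected) := by
  obtain ⟨S, -, hSmin⟩ := (Set.toFinite {S : Set V | S ⊆ W ∧ 3 ≤ S.ncard ∧
    (G.induce S).Connected ∧ (W \ S = ∅ ∨ (G.induce (W \ S)).Connected)}).exists_le_minimal
      (a := W) ⟨subset_rfl, h3, hW, Or.inl (by simp)⟩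
  obtain ⟨hSW, hS3, hS, hR⟩ := hSmin.prop
  refine ⟨S, hSW, hS3, ?_, hR⟩
  by_contra hT
  obtain ⟨Z, hZS, hZ5, hZ⟩ := exists_cycle_set hg hS hT
  -- A vertex through which the complement of `S`, if any, is attached to `S`.
  obtain ⟨v, hvS, hB₀⟩ : ∃ v ∈ S, (G.induce (insert v (W \ S))).Connected := by
    rcases hR with hR | hR
    · obtain ⟨v, hv⟩ : S.Nonempty := Set.nonempty_of_ncard_ne_zero (by omega)
      refine ⟨v, hv, ?_⟩
      rw [hR]
      have e : {x | x ∈ (Walk.nil : G.Walk v v).support} = insert v ∅ := by ext; simp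
      exact e ▸ (Walk.nil : G.Walk v v).connected_induce_support
    · obtain ⟨a, ha⟩ : S.Nonempty := Set.nonempty_of_ncard_ne_zero (by omega)
      obtain ⟨b, hb⟩ := hR.nonempty
      obtain ⟨x, hxW, hxS, y, hyW, hyS, hxy⟩ := exists_crossing_edge hW (hSW ha) ha hb.1 hb.2
      exact ⟨x, hxS, connected_insert_of_adj hR ⟨hyW, hyS⟩ hxy.symm⟩
  -- `A` is the component of `S \ {v}` that contains the rest of the cycle.
  obtain ⟨A, hZA, hAmax⟩ := (Set.toFinite {A : Set V | A ⊆ S \ {v} ∧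
    (G.induce A).Connected}).exists_le_maximal (a := Z \ {v})
      ⟨Set.sdiff_subset_sdiff_left hZS, hZ v⟩
  obtain ⟨hAS, hA⟩ := hAmax.prop
  have hvA : v ∉ A := fun h => (hAS h).2 rfl
  have hA3 : 3 ≤ A.ncard := by
    have h1 := Set.ncard_le_ncard hZA
    have h2 := Set.pred_ncard_le_ncard_sdiff_singleton Z v
    omega
  -- `B` is the component of `W \ A` that contains `v`; it turns out to be all of `W \ A`.
  obtain ⟨B, hB₀B, hBmax⟩ := (Set.toFinite {B : Set V | B ⊆ W \ A ∧
    (G.induce B).Connected}).exists_le_maximal (a := insert v (W \ S)) ⟨by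
      rintro x (rfl | hx)
      · exact ⟨hSW hvS, hvA⟩
      · exact ⟨hx.1, fun h => hx.2 (hAS h).1⟩, hB₀⟩
  obtain ⟨hBW, hB⟩ := hBmax.prop
  have hvB : v ∈ B := hB₀B (by simp)
  have hBeq : B = W \ A := by
    refine hBW.antisymm fun w hw => ?_
    by_contra hwB
    have hwS : w ∈ S := by
      by_contra h
      exact hwB (hB₀B (Or.inr ⟨hw.1, h⟩))
    -- An edge leaving `A ∪ B` inside `S` would enlarge `A` or `B`.
    obtain ⟨x, hxS, hx, y, hyS, hy, hxy⟩ := exists_crossing_edge hS (A := A ∪ B) hvS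
      (Or.inr hvB) hwS (by rintro (h | h); exacts [hw.2 h, hwB h])
    rw [Set.mem_union, not_or] at hy
    rcases hx with hx | hx
    · refine hy.1 (hAmax.le_of_ge (y := insert y A) ⟨?_, connected_insert_of_adj hA hx hxy⟩
        (Set.subset_insert _ _) (Set.mem_insert _ _))
      rintro z (rfl | hz)
      · exact ⟨hyS, fun h => hy.2 (h ▸ hvB)⟩
      · exact hAS hz
    · refine hy.2 (hBmax.le_of_ge (y := insert y B) ⟨?_, connected_insert_of_adj hB hx hxy⟩
        (Set.subset_insert _ _) (Set.mem_insert _ _))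
      rintro z (rfl | hz)
      · exact ⟨hSW hyS, hy.1⟩
      · exact hBW hz
  rw [hBeq] at hB
  exact hvA (hSmin.le_of_le (y := A) ⟨fun x hx => hSW (hAS hx).1, hA3, hA, Or.inr hB⟩
    (fun x hx => (hAS hx).1) hvS)

/-- The bound for connected vertex sets. At size five only `2` trees are guaranteed, as the
5-cycle needs two. -/
lemma exists_cover (hg : 5 ≤ G.egirth) (n : ℕ) : ∀ W : Set V, W.ncard = n →
    (G.induce W).Connected → 3 ≤ n →
    ∃ C, IsTreeCoverOn G W C ∧ (3 * C.card ≤ n ∨ n = 5 ∧ C.card ≤ 2) := by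
  classical
  induction n using Nat.strong_induction_on with
  | _ n ih =>
  intro W hn hW h3
  by_cases hT : (G.induce W).IsTree
  · exact ⟨_, IsTreeCoverOn.single hT, by simp; omega⟩
  have hn5 : 5 ≤ n := by
    by_contra h
    exact hT (isTree_of_ncard_le_four hg hW (by omega))
  obtain ⟨S, hSW, hS3, hS, hR⟩ := exists_peel hg hW (by omega)
  have hcard := Set.ncard_sdiff_add_ncard_of_subset hSW
  rcases hR with hR | hR
  · exact absurd (hSW.antisymm (Set.sdiff_eq_empty.1 hR) ▸ hS) hT
  by_cases hRT : (G.induce (W \ S)).IsTree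
  · obtain ⟨C, hC, hC2⟩ := exists_cover_pair hSW hS hRT
    exact ⟨C, hC, by omega⟩
  have hR5 : 5 ≤ (W \ S).ncard := by
    by_contra h
    exact hRT (isTree_of_ncard_le_four hg hR (by omega))
  by_cases h8 : (W \ S).ncard = 5 ∧ S.ncard = 3
  · -- A three-vertex tree next to a 5-cycle: move a vertex `c` of the cycle to the tree.
    obtain ⟨b, hb⟩ := hR.nonempty
    obtain ⟨a, ha⟩ := hS.connected.nonempty
    obtain ⟨x, -, hxS, c, hcW, hcS, hxc⟩ := exists_crossing_edge hW (hSW ha) ha hb.1 hb.2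
    have h4 : (G.induce (insert c S)).IsTree := by
      refine isTree_of_ncard_le_four hg (connected_insert_of_adj hS.connected hxS hxc) ?_
      rw [Set.ncard_insert_of_notMem hcS]
      omega
    have h4' := isTree_diff_of_ncard_eq_five hg hR hRT h8.1 ⟨hcW, hcS⟩
    have e : (W \ S) \ {c} = W \ insert c S := by
      ext z; simp only [Set.mem_sdiff, Set.mem_insert_iff, Set.mem_singleton_iff]; tauto
    rw [e] at h4'
    obtain ⟨C, hC, hC2⟩ := exists_cover_pair (Set.insert_subset hcW hSW) h4 h4'
    exact ⟨C, hC, by omega⟩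
  · obtain ⟨C, hC, hC2⟩ := ih _ (by omega) (W \ S) rfl hR (by omega)
    refine ⟨_, hC.insert hSW hS, ?_⟩
    have := Finset.card_insert_le S C
    omega

end TreeCover

theorem stmt_6 {V : Type} [Fintype V] (G : SimpleGraph V) (hG : G.Connected)
    (hn : 6 ≤ Fintype.card V) (hg : 5 ≤ G.egirth) :
    (treeCoverNumber G : ℝ) ≤ (Fintype.card V : ℝ) / 3 := by
  have hU : (G.induce Set.univ).Connected := (induceUnivIso G).connected_iff.2 hG
  obtain ⟨C, ⟨h1, h2, h3⟩, hC⟩ := exists_cover hg (Fintype.card V) Set.univ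
    (by rw [Set.ncard_univ, Nat.card_eq_fintype_card]) hU (by omega)
  have hle : treeCoverNumber G ≤ C.card :=
    Nat.sInf_le ⟨C, ⟨h1, fun v => (h2 v).1 (Set.mem_univ v), h3⟩, rfl⟩
  have h : treeCoverNumber G * 3 ≤ Fintype.card V := by omega
  rw [le_div_iff₀ (by norm_num)]
  exact_mod_cast h
end

section
/- Let G be a connected outerplanar graph of odd order n ≥ 3. Then T(G) = ⌈n/2⌉ if and only if G is a block-clique graph in which every block is a triangle K₃. -/
/-!
The theorem holds because a connected graph `G` with no `K₄` minor either has a tree cover with at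
most `n / 2` trees, or is a *triangle cactus*: a graph obtained from single vertices and triangles
by gluing at single vertices (`Cactus`). For graphs with at least two vertices the triangle cacti
are exactly the connected graphs all of whose blocks are triangles (`cactus_univ_iff`): a
nonseparable set cannot cross a gluing vertex, and conversely one splits at cut vertices until only
triangles are left.

*Triangle cacti have tree cover number `(n + 1) / 2`.* They are factor-critical: deleting a vertex
leaves a graph with a perfect matching (`Cactus.cov_diff`), so the matching edges together with the
deleted vertex form a cover of this size (`Cactus.cov`). For the lower bound (`Cactus.le_of_cov`),
restrict a cover of a graph glued from `A` and `B` at `v` to the two sides; the restrictions are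
trees, and only the tree through `v` is counted twice, so the bounds for `A` and `B` add up.

*The dichotomy* (`cov_or_cactus`), by induction on the number of vertices. A depth-first search
produces an induced star `R` with at least two vertices whose removal leaves a connected graph `H`
or nothing (`exists_removable`). If `H` has a cover of size at most half its order, add `R`. If `H`
is a triangle cactus and `R` has at least three vertices, then `R` together with an optimal cover of
`H` is small enough. There remains the case of an edge `R = ab`. If some `c` in `H` is adjacent to
exactly one of `a` and `b`, the induced path on `a, b, c` and a perfect matching of `H - c` form a
small cover. Otherwise `a` and `b` have the same neighbours in `H`. Two such neighbours would give a
`K₄` minor (`hasMinor_K4`), as `H` is connected; hence there is exactly one, and `G` arises from `H`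
by gluing on a triangle.
-/

open SimpleGraph

/-- The induced subgraph on `s` is nonseparable: connected and with no cut-vertex. -/
def IsNonseparable {V : Type} (G : SimpleGraph V) (s : Set V) : Prop :=
  (G.induce s).Connected ∧
    ∀ v ∈ s, (s \ {v}).Nonempty → (G.induce (s \ {v})).Connected

/-- A block: a maximal nonseparable induced subgraph. -/
def IsBlock {V : Type} (G : SimpleGraph V) (s : Set V) : Prop :=
  IsNonseparable G s ∧ ∀ t : Set V, s ⊆ t → IsNonseparable G t → s = t

/-- A pendant block: a block meeting exactly one other block. -/
def IsPendantBlock {V : Type} (G : SimpleGraph V) (s : Set V) : Prop :=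
  IsBlock G s ∧ ∃! t : Set V, IsBlock G t ∧ t ≠ s ∧ (s ∩ t).Nonempty
/-- `H` is a minor of `G`: disjoint connected branch sets, one for each vertex of `H`,
with edges of `H` realized by edges of `G` between the corresponding branch sets. -/
def HasMinor {V W : Type} (G : SimpleGraph V) (H : SimpleGraph W) : Prop :=
  ∃ f : W → Set V,
    (∀ w, (G.induce (f w)).Connected) ∧
    (∀ w w', w ≠ w' → Disjoint (f w) (f w')) ∧
    (∀ w w', H.Adj w w' → ∃ a ∈ f w, ∃ b ∈ f w', G.Adj a b)

/-- Outerplanar: no `K₄` minor and no `K_{2,3}` minor. -/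
def Outerplanar {V : Type} (G : SimpleGraph V) : Prop :=
  ¬ HasMinor G (completeGraph (Fin 4)) ∧
    ¬ HasMinor G (completeBipartiteGraph (Fin 2) (Fin 3))

/-- The family `F`: connected block-clique graphs in which every block is a triangle. -/
def InF {V : Type} (G : SimpleGraph V) : Prop :=
  G.Connected ∧ ∀ s : Set V, IsBlock G s → G.IsClique s ∧ s.ncard = 3

/-! ### Connectedness of induced subgraphs -/

/-- Connectedness as propagation: if `A` contains a vertex of `S` and is closed under taking
neighbours inside `S`, then `A` contains all of `S`. -/
lemma conn_elim {V : Type} {G : SimpleGraph V} {S : Set V} (h : (G.induce S).Connected)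
    {r : V} (hr : r ∈ S) (A : Set V) (hrA : r ∈ A)
    (hA : ∀ x ∈ A, x ∈ S → ∀ y ∈ S, G.Adj x y → y ∈ A) : S ⊆ A := by
  intro y hy
  obtain ⟨p⟩ := h.preconnected ⟨r, hr⟩ ⟨y, hy⟩
  have key : ∀ (u w : S), (G.induce S).Walk u w → u.1 ∈ A → w.1 ∈ A := by
    intro u w p
    induction p with
    | nil => exact id
    | cons hadj _ ih => exact fun hu => ih (hA _ hu (Subtype.coe_prop _) _ (Subtype.coe_prop _) hadj)
  exact key _ _ p hrA

/-- Converse of `conn_elim`, with a single root. -/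
lemma conn_of_root {V : Type} {G : SimpleGraph V} {S : Set V} {r : V} (hr : r ∈ S)
    (h : ∀ A : Set V, r ∈ A → (∀ x ∈ A, x ∈ S → ∀ y ∈ S, G.Adj x y → y ∈ A) → S ⊆ A) :
    (G.induce S).Connected := by
  have key : S ⊆ {x | ∃ hx : x ∈ S, (G.induce S).Reachable ⟨r, hr⟩ ⟨x, hx⟩} := by
    refine h _ ⟨hr, Reachable.refl _⟩ ?_
    rintro x ⟨hx, hrx⟩ _ y hy hxy
    refine ⟨hy, hrx.trans (Adj.reachable ?_)⟩
    exact hxy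
  rw [connected_iff_exists_forall_reachable]
  exact ⟨⟨r, hr⟩, fun ⟨x, hx⟩ => (key hx).2⟩

lemma conn_nonempty {V : Type} {G : SimpleGraph V} {S : Set V}
    (h : (G.induce S).Connected) : S.Nonempty :=
  Set.nonempty_coe_sort.1 h.nonempty

lemma exists_adj_of_conn {V : Type} {G : SimpleGraph V} {S : Set V}
    (h : (G.induce S).Connected) {x y : V} (hx : x ∈ S) (hy : y ∈ S) (hxy : x ≠ y) :
    ∃ z ∈ S, G.Adj x z := by
  by_contra! hc
  exact hxy (conn_elim h hx {x} rfl (by grind) hy).symm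

/-- The connected component of `x` in the subgraph induced on `S`. -/
lemma exists_component {V : Type} (G : SimpleGraph V) {S : Set V} {x : V} (hx : x ∈ S) :
    ∃ D ⊆ S, x ∈ D ∧ (G.induce D).Connected ∧ ∀ y ∈ D, ∀ z ∈ S, G.Adj y z → z ∈ D := by
  -- `D` is the intersection of all sets containing `x` and closed under neighbours in `S`
  let D : Set V := {y | y ∈ S ∧
    ∀ A : Set V, x ∈ A → (∀ u ∈ A, u ∈ S → ∀ w ∈ S, G.Adj u w → w ∈ A) → y ∈ A}
  have hD : ∀ y, y ∈ D ↔ (y ∈ S ∧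
    ∀ A : Set V, x ∈ A → (∀ u ∈ A, u ∈ S → ∀ w ∈ S, G.Adj u w → w ∈ A) → y ∈ A) :=
    fun _ => Iff.rfl
  have hcl : ∀ y ∈ D, ∀ z ∈ S, G.Adj y z → z ∈ D := fun y hy z hz hyz =>
    ⟨hz, fun A hxA hA => hA y (hy.2 A hxA hA) hy.1 z hz hyz⟩
  have hxD : x ∈ D := ⟨hx, fun A h _ => h⟩
  refine ⟨D, fun y hy => hy.1, hxD, ?_, hcl⟩
  refine conn_of_root hxD fun A hxA hA y hy => ?_
  refine (hy.2 (A ∩ D) ⟨hxA, hxD⟩ ?_).1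
  rintro u ⟨huA, huD⟩ huS w hw huw
  have := hcl u huD w hw huw
  exact ⟨hA u huA huD w this huw, this⟩

/-- Two connected sets joined by an edge have a connected union. -/
lemma conn_union_of_adj {V : Type} {G : SimpleGraph V} {S T : Set V} {x y : V}
    (hS : (G.induce S).Connected) (hT : (G.induce T).Connected) (hx : x ∈ S) (hy : y ∈ T)
    (hxy : G.Adj x y) : (G.induce (S ∪ T)).Connected := by
  refine conn_of_root (Or.inl hx) fun A hxA hA => ?_
  have h1 : S ⊆ A := conn_elim hS hx A hxA (by grind)
  have h2 : T ⊆ A := conn_elim hT hy A (by grind) (by grind)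
  grind

/-- Removing from a connected set `S` a component of `S \ {r}` leaves a connected set. -/
lemma conn_diff_component {V : Type} {G : SimpleGraph V} {S D : Set V} {r : V}
    (hS : (G.induce S).Connected) (hr : r ∈ S) (hDS : D ⊆ S \ {r})
    (hcl : ∀ y ∈ D, ∀ z ∈ S \ {r}, G.Adj y z → z ∈ D) : (G.induce (S \ D)).Connected := by
  refine conn_of_root (r := r) ⟨hr, fun h => (hDS h).2 rfl⟩ fun A hrA hA => ?_
  have h : S ⊆ A ∪ D := by
    refine conn_elim hS hr _ (Or.inl hrA) ?_
    intro x hx hxS y hy hxy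
    by_cases hyr : y = r
    · grind
    · grind
  grind

/-! ### Stars -/

/-- A set spanning a star with centre `r` induces a tree. -/
lemma isTree_of_star {V : Type} {G : SimpleGraph V} {S : Set V} {r : V} (hr : r ∈ S)
    (h1 : ∀ x ∈ S, x ≠ r → G.Adj r x)
    (h2 : ∀ x ∈ S, ∀ y ∈ S, x ≠ r → y ≠ r → ¬ G.Adj x y) : (G.induce S).IsTree := by
  refine ⟨conn_of_root hr fun A hrA hA x hx => ?_, ?_⟩
  · by_cases h : x = r <;> grind
  · refine (isAcyclic_starGraph (⟨r, hr⟩ : S)).anti ?_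
    rintro ⟨x, hx⟩ ⟨y, hy⟩ hxy
    have hxy' : G.Adj x y := hxy
    have hne := hxy'.ne
    simp only [starGraph_adj, Subtype.mk.injEq, ne_eq]
    grind

lemma isTree_singleton {V : Type} (G : SimpleGraph V) (v : V) :
    (G.induce ({v} : Set V)).IsTree :=
  isTree_of_star (r := v) rfl (by grind) (by grind)

lemma isTree_pair {V : Type} {G : SimpleGraph V} {a b : V} (h : G.Adj a b) :
    (G.induce ({a, b} : Set V)).IsTree :=
  isTree_of_star (r := a) (by grind) (by grind) (by
    have irr : ∀ x, ¬ G.Adj x x := fun x => G.irrefl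
    grind)

lemma isTree_path {V : Type} {G : SimpleGraph V} {a b c : V} (h : G.Adj a b) (h' : G.Adj a c)
    (hn : ¬ G.Adj b c) : (G.induce ({a, b, c} : Set V)).IsTree :=
  isTree_of_star (r := a) (by grind) (by grind) (by
    have hn' : ¬ G.Adj c b := fun h => hn h.symm
    have irr : ∀ x, ¬ G.Adj x x := fun x => G.irrefl
    grind)

/-- The rooted form of the extraction of a star: either `S` is a tree, or it contains a tree
avoiding the root, with at least two vertices, whose removal leaves `S` connected. -/
lemma exists_removable_rooted {V : Type} [Finite V] (G : SimpleGraph V) (n : ℕ) :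
    ∀ S : Set V, S.ncard = n → (G.induce S).Connected → ∀ r ∈ S,
      (G.induce S).IsTree ∨ ∃ R ⊆ S, r ∉ R ∧ R.Nontrivial ∧ (G.induce R).IsTree ∧
        (G.induce (S \ R)).Connected := by
  induction n using Nat.strong_induction_on with
  | _ n ih =>
  intro S hn hS r hr
  by_cases hedge : ∃ x ∈ S \ {r}, ∃ y ∈ S \ {r}, G.Adj x y
  · right
    obtain ⟨x, hx, y, hy, hxy⟩ := hedge
    obtain ⟨D, hDS, hxD, hDc, hcl⟩ := exists_component G hx
    have hyD := hcl x hxD y hy hxy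
    have hcompl := conn_diff_component hS hr hDS hcl
    -- a vertex of `D` adjacent to the root
    obtain ⟨d, hdD, hrd⟩ : ∃ d ∈ D, G.Adj d r := by
      by_contra! hc
      have := conn_elim hS (hDS hxD).1 D hxD (by grind) hr
      exact (hDS this).2 rfl
    have hlt : D.ncard < n := by
      rw [← hn]
      exact Set.ncard_lt_ncard ⟨fun z hz => (hDS hz).1, fun h => (hDS (h hr)).2 rfl⟩
    rcases ih _ hlt D rfl hDc d hdD with ht | ⟨R, hRD, hdR, hRn, hRt, hRc⟩
    · exact ⟨D, by grind, by grind, ⟨x, hxD, y, hyD, hxy.ne⟩, ht, hcompl⟩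
    · refine ⟨R, by grind, by grind, hRn, hRt, ?_⟩
      have := conn_union_of_adj hRc hcompl (x := d) (y := r) ⟨hdD, hdR⟩ (by grind) hrd
      have e : S \ R = D \ R ∪ S \ D := by ext z; grind
      rwa [e]
  · left
    refine isTree_of_star hr ?_ (by grind)
    intro x hx hxr
    obtain ⟨z, hz, hxz⟩ := exists_adj_of_conn hS hx hr hxr
    by_cases h : z = r
    · subst h; exact hxz.symm
    · exact (hedge ⟨x, ⟨hx, hxr⟩, z, ⟨hz, h⟩, hxz⟩).elim

/-- A connected set with at least two vertices contains an induced tree with at least two vertices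
whose removal leaves the empty set or a connected set. -/
lemma exists_removable {V : Type} [Finite V] (G : SimpleGraph V) {S : Set V}
    (hS : (G.induce S).Connected) (hn : S.Nontrivial) :
    ∃ R ⊆ S, R.Nontrivial ∧ (G.induce R).IsTree ∧ (R = S ∨ (G.induce (S \ R)).Connected) := by
  obtain ⟨r, hr⟩ := conn_nonempty hS
  rcases exists_removable_rooted G _ S rfl hS r hr with h | ⟨R, h1, _, h2, h3, h4⟩
  · exact ⟨S, subset_rfl, hn, h, Or.inl rfl⟩
  · exact ⟨R, h1, h2, h3, Or.inr h4⟩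

/-! ### Triangle cacti and covers of vertex sets -/

/-- The vertices `a`, `b`, `c` form a triangle. -/
def IsTri {V : Type} (G : SimpleGraph V) (a b c : V) : Prop :=
  G.Adj a b ∧ G.Adj a c ∧ G.Adj b c

/-- Vertex sets inducing a connected graph all of whose blocks are triangles, generated from single
vertices and triangles by gluing along one vertex. A single vertex is allowed. -/
inductive Cactus {V : Type} (G : SimpleGraph V) : Set V → Prop
  | single (v : V) : Cactus G {v}
  | tri (a b c : V) (h : IsTri G a b c) : Cactus G {a, b, c}
  | glue (A B : Set V) (v : V) (hA : Cactus G A) (hB : Cactus G B) (hvA : v ∈ A) (hvB : v ∈ B)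
      (hint : ∀ x ∈ A, x ∈ B → x = v)
      (hadj : ∀ x ∈ A, ∀ y ∈ B, G.Adj x y → x = v ∨ y = v) : Cactus G (A ∪ B)

/-- The set `S` can be partitioned into at most `k` sets, each inducing a tree. -/
def Cov {V : Type} (G : SimpleGraph V) (S : Set V) (k : ℕ) : Prop :=
  ∃ C : Finset (Set V), (∀ s ∈ C, s ⊆ S ∧ (G.induce s).IsTree) ∧ (∀ v ∈ S, ∃ s ∈ C, v ∈ s) ∧
    (∀ s ∈ C, ∀ t ∈ C, s ≠ t → Disjoint s t) ∧ C.card ≤ k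

lemma Cov.empty {V : Type} (G : SimpleGraph V) : Cov G ∅ 0 :=
  ⟨∅, by simp, by simp, by simp, by simp⟩

lemma Cov.of_tree {V : Type} {G : SimpleGraph V} {S : Set V} (h : (G.induce S).IsTree) :
    Cov G S 1 :=
  ⟨{S}, by simp [h], by simp, by grind, by simp⟩

lemma Cov.union {V : Type} {G : SimpleGraph V} {S T : Set V} {k l : ℕ} (hS : Cov G S k)
    (hT : Cov G T l) (hd : Disjoint S T) : Cov G (S ∪ T) (k + l) := by
  classical
  obtain ⟨C, h1, h2, h3, h4⟩ := hS
  obtain ⟨D, k1, k2, k3, k4⟩ := hT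
  refine ⟨C ∪ D, ?_, ?_, ?_, (Finset.card_union_le _ _).trans (by omega)⟩
  · intro s hs
    rcases Finset.mem_union.1 hs with h | h
    · exact ⟨(h1 s h).1.trans Set.subset_union_left, (h1 s h).2⟩
    · exact ⟨(k1 s h).1.trans Set.subset_union_right, (k1 s h).2⟩
  · rintro v (h | h)
    · obtain ⟨s, hs, hv⟩ := h2 v h
      exact ⟨s, Finset.mem_union_left _ hs, hv⟩
    · obtain ⟨s, hs, hv⟩ := k2 v h
      exact ⟨s, Finset.mem_union_right _ hs, hv⟩
  · intro s hs t ht hst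
    rcases Finset.mem_union.1 hs with h | h <;> rcases Finset.mem_union.1 ht with h' | h'
    · exact h3 s h t h' hst
    · exact hd.mono (h1 s h).1 (k1 t h').1
    · exact hd.symm.mono (k1 s h).1 (h1 t h').1
    · exact k3 s h t h' hst

lemma ncard_tri {V : Type} {G : SimpleGraph V} {a b c : V} (h : IsTri G a b c) :
    ({a, b, c} : Set V).ncard = 3 :=
  Set.ncard_eq_three.2 ⟨a, b, c, h.1.ne, h.2.1.ne, h.2.2.ne, rfl⟩

lemma ncard_glue {V : Type} [Finite V] {A B : Set V} {v : V} (hvA : v ∈ A) (hvB : v ∈ B)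
    (hint : ∀ x ∈ A, x ∈ B → x = v) : (A ∪ B).ncard + 1 = A.ncard + B.ncard := by
  have h : A ∩ B = {v} := by ext x; grind
  have := Set.ncard_union_add_ncard_inter A B
  rwa [h, Set.ncard_singleton] at this

/-- Triangle cacti are factor-critical: after deleting any vertex the rest has a perfect matching,
hence a cover by half as many trees as there are vertices left. -/
lemma Cactus.cov_diff {V : Type} [Finite V] {G : SimpleGraph V} {S : Set V} (hS : Cactus G S) :
    ∀ c ∈ S, ∃ k, 2 * k + 1 = S.ncard ∧ Cov G (S \ {c}) k := by
  induction hS with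
  | single v =>
    intro c hc
    obtain rfl : c = v := hc
    exact ⟨0, by simp, by simpa using Cov.empty G⟩
  | tri a b c h =>
    intro x hx
    refine ⟨1, by rw [ncard_tri h], ?_⟩
    have n1 := h.1.ne
    have n2 := h.2.1.ne
    have n3 := h.2.2.ne
    rcases hx with rfl | rfl | rfl
    · have : ({x, b, c} : Set V) \ {x} = {b, c} := by ext; grind
      rw [this]; exact Cov.of_tree (isTree_pair h.2.2)
    · have : ({a, x, c} : Set V) \ {x} = {a, c} := by ext; grind
      rw [this]; exact Cov.of_tree (isTree_pair h.2.1)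
    · have : ({a, b, x} : Set V) \ {x} = {a, b} := by ext; grind
      rw [this]; exact Cov.of_tree (isTree_pair h.1)
  | glue A B v _ _ hvA hvB hint hadj ihA ihB =>
    intro c hc
    have hcard := ncard_glue hvA hvB hint
    rcases hc with hc | hc
    · obtain ⟨k, hk, hck⟩ := ihA c hc
      obtain ⟨l, hl, hcl⟩ := ihB v hvB
      refine ⟨k + l, by omega, ?_⟩
      have : (A ∪ B) \ {c} = A \ {c} ∪ B \ {v} := by ext x; by_cases x = c <;> grind
      rw [this]
      exact hck.union hcl (Set.disjoint_left.2 (by grind))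
    · obtain ⟨k, hk, hck⟩ := ihA v hvA
      obtain ⟨l, hl, hcl⟩ := ihB c hc
      refine ⟨k + l, by omega, ?_⟩
      have : (A ∪ B) \ {c} = A \ {v} ∪ B \ {c} := by ext x; by_cases x = c <;> grind
      rw [this]
      exact hck.union hcl (Set.disjoint_left.2 (by grind))

lemma Cactus.cov {V : Type} [Finite V] {G : SimpleGraph V} {S : Set V} (hS : Cactus G S) {c : V}
    (hc : c ∈ S) : ∃ k, 2 * k = S.ncard + 1 ∧ Cov G S k := by
  obtain ⟨k, hk, h⟩ := hS.cov_diff c hc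
  refine ⟨1 + k, by omega, ?_⟩
  have e : S = {c} ∪ S \ {c} := by ext x; grind
  rw [e]
  exact (Cov.of_tree (isTree_singleton G c)).union h (Set.disjoint_left.2 (by grind))

/-! ### The lower bound for triangle cacti -/

/-- If `A` and `B` meet only in `v` and no edge joins `A \ {v}` to `B \ {v}`, then a connected subset
of `A ∪ B` meeting both contains `v`. -/
lemma mem_of_conn_glue {V : Type} {G : SimpleGraph V} {A B s : Set V} {v : V}
    (hint : ∀ x ∈ A, x ∈ B → x = v) (hadj : ∀ x ∈ A, ∀ y ∈ B, G.Adj x y → x = v ∨ y = v)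
    (hs : (G.induce s).Connected) (hsub : s ⊆ A ∪ B) (hA : (s ∩ A).Nonempty)
    (hB : (s ∩ B).Nonempty) : v ∈ s := by
  by_contra hv
  obtain ⟨x, hxs, hxA⟩ := hA
  obtain ⟨y, hys, hyB⟩ := hB
  have : s ⊆ A := conn_elim hs hxs A hxA (by
    intro z hz hzs w hw hzw
    rcases hsub hw with h | h
    · exact h
    · rcases hadj z hz w h hzw with rfl | rfl <;> contradiction)
  have := hint y (this hys) hyB
  grind

/-- Trees restrict to trees on either side of a cut vertex. -/
lemma isTree_inter_glue {V : Type} {G : SimpleGraph V} {A B s : Set V} {v : V} (hvA : v ∈ A)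
    (hint : ∀ x ∈ A, x ∈ B → x = v) (hadj : ∀ x ∈ A, ∀ y ∈ B, G.Adj x y → x = v ∨ y = v)
    (hs : (G.induce s).IsTree) (hsub : s ⊆ A ∪ B) (hA : (s ∩ A).Nonempty) :
    (G.induce (s ∩ A)).IsTree := by
  refine ⟨?_, hs.isAcyclic.embedding (G.induceHomOfLE Set.inter_subset_left)⟩
  by_cases hv : v ∈ s
  · refine conn_of_root (r := v) ⟨hv, hvA⟩ fun K hvK hK => ?_
    have h : s ⊆ (K ∩ A) ∪ B := conn_elim hs.1 hv _ (Or.inl ⟨hvK, hvA⟩) (by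
      intro x hx hxs y hys hxy
      rcases hsub hys with h | h
      · rcases hx with hx | hx
        · exact Or.inl ⟨hK x hx.1 ⟨hxs, hx.2⟩ y ⟨hys, h⟩ hxy, h⟩
        · rcases hadj y h x hx hxy.symm with rfl | rfl
          · exact Or.inl ⟨hvK, h⟩
          · exact Or.inl ⟨hK x hvK ⟨hxs, hvA⟩ y ⟨hys, h⟩ hxy, h⟩
      · exact Or.inr h)
    grind
  · have hB : ¬ (s ∩ B).Nonempty := fun hB => hv (mem_of_conn_glue hint hadj hs.1 hsub hA hB)
    have : s ∩ A = s := by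
      ext x
      have : x ∈ s → ¬ x ∈ B := fun h h' => hB ⟨x, h, h'⟩
      grind
    rw [this]; exact hs.1

/-- A cover of `A ∪ B` restricts to `A`; the number of parts is that of the parts meeting `A`. -/
lemma cov_inter_glue {V : Type} {G : SimpleGraph V} {A B : Set V} {v : V} (hvA : v ∈ A)
    (hint : ∀ x ∈ A, x ∈ B → x = v) (hadj : ∀ x ∈ A, ∀ y ∈ B, G.Adj x y → x = v ∨ y = v)
    {C : Finset (Set V)} (h1 : ∀ s ∈ C, s ⊆ A ∪ B ∧ (G.induce s).IsTree)
    (h2 : ∀ v ∈ A, ∃ s ∈ C, v ∈ s) (h3 : ∀ s ∈ C, ∀ t ∈ C, s ≠ t → Disjoint s t)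
    [DecidablePred fun s : Set V => (s ∩ A).Nonempty] :
    Cov G A (C.filter fun s => (s ∩ A).Nonempty).card := by
  classical
  refine ⟨(C.filter fun s => (s ∩ A).Nonempty).image (fun s => s ∩ A), ?_, ?_, ?_,
    Finset.card_image_le⟩
  · intro s hs
    obtain ⟨t, ht, rfl⟩ := Finset.mem_image.1 hs
    obtain ⟨htC, hne⟩ := Finset.mem_filter.1 ht
    exact ⟨Set.inter_subset_right,
      isTree_inter_glue hvA hint hadj (h1 t htC).2 (h1 t htC).1 hne⟩
  · intro x hx
    obtain ⟨s, hs, hxs⟩ := h2 x hx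
    exact ⟨s ∩ A, Finset.mem_image_of_mem _ (Finset.mem_filter.2 ⟨hs, x, hxs, hx⟩), hxs, hx⟩
  · intro s hs t ht hst
    obtain ⟨s, hs', rfl⟩ := Finset.mem_image.1 hs
    obtain ⟨t, ht', rfl⟩ := Finset.mem_image.1 ht
    have : s ≠ t := by rintro rfl; exact hst rfl
    exact (h3 s (Finset.mem_filter.1 hs').1 t (Finset.mem_filter.1 ht').1 this).mono
      Set.inter_subset_left Set.inter_subset_left

lemma Cactus.le_of_cov {V : Type} [Finite V] {G : SimpleGraph V} {S : Set V} (hS : Cactus G S) :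
    ∀ k, Cov G S k → S.ncard + 1 ≤ 2 * k := by
  classical
  induction hS with
  | single v =>
    rintro k ⟨C, h1, h2, h3, h4⟩
    obtain ⟨s, hs, _⟩ := h2 v rfl
    have := Finset.card_pos.2 ⟨s, hs⟩
    rw [Set.ncard_singleton]; omega
  | tri a b c h =>
    rintro k ⟨C, h1, h2, h3, h4⟩
    rw [ncard_tri h]
    by_contra hk
    have hC : C.card ≤ 1 := by omega
    obtain ⟨s, hs, has⟩ := h2 a (by simp)
    obtain ⟨t, ht, hbt⟩ := h2 b (by simp)
    obtain ⟨u, hu, hcu⟩ := h2 c (by simp)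
    obtain rfl := Finset.card_le_one.1 hC s hs t ht
    obtain rfl := Finset.card_le_one.1 hC s hs u hu
    -- a single part would be a tree containing a triangle
    have hfree := (h1 s hs).2.isAcyclic.cliqueFree le_rfl
    have hab : (G.induce s).Adj ⟨a, has⟩ ⟨b, hbt⟩ := h.1
    have hac : (G.induce s).Adj ⟨a, has⟩ ⟨c, hcu⟩ := h.2.1
    have hbc : (G.induce s).Adj ⟨b, hbt⟩ ⟨c, hcu⟩ := h.2.2
    exact hfree _ (is3Clique_triple_iff.2 ⟨hab, hac, hbc⟩)
  | glue A B v _ _ hvA hvB hint hadj ihA ihB =>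
    rintro k ⟨C, h1, h2, h3, h4⟩
    have hcard := ncard_glue hvA hvB hint
    have hA := ihA _ (cov_inter_glue hvA hint hadj h1 (fun x hx => h2 x (Or.inl hx)) h3)
    have hB := ihB _ (cov_inter_glue (A := B) (B := A) (v := v) hvB (by grind)
      (fun x hx y hy hxy => (hadj y hy x hx hxy.symm).symm)
      (by rw [Set.union_comm]; exact h1) (fun x hx => h2 x (Or.inr hx)) h3)
    -- only the part containing `v` meets both sides
    have hinter : ((C.filter fun s => (s ∩ A).Nonempty) ∩
        (C.filter fun s => (s ∩ B).Nonempty)).card ≤ 1 := by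
      refine Finset.card_le_one.2 fun s hs t ht => ?_
      simp only [Finset.mem_inter, Finset.mem_filter] at hs ht
      have hvs := mem_of_conn_glue hint hadj (h1 s hs.1.1).2.1 (h1 s hs.1.1).1 hs.1.2 hs.2.2
      have hvt := mem_of_conn_glue hint hadj (h1 t ht.1.1).2.1 (h1 t ht.1.1).1 ht.1.2 ht.2.2
      by_contra hst
      exact Set.disjoint_left.1 (h3 s hs.1.1 t ht.1.1 hst) hvs hvt
    have hunion : ((C.filter fun s => (s ∩ A).Nonempty) ∪
        (C.filter fun s => (s ∩ B).Nonempty)).card ≤ C.card :=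
      Finset.card_le_card (Finset.union_subset (Finset.filter_subset _ _) (Finset.filter_subset _ _))
    have := Finset.card_union_add_card_inter (C.filter fun s => (s ∩ A).Nonempty)
      (C.filter fun s => (s ∩ B).Nonempty)
    omega

/-! ### Triangle cacti and blocks -/

lemma conn_of_clique {V : Type} {G : SimpleGraph V} {S : Set V} (hne : S.Nonempty)
    (h : ∀ x ∈ S, ∀ y ∈ S, x ≠ y → G.Adj x y) : (G.induce S).Connected := by
  obtain ⟨r, hr⟩ := hne
  exact conn_of_root hr fun A hrA hA x hx => by by_cases x = r <;> grind

lemma nonsep_of_clique {V : Type} {G : SimpleGraph V} {S : Set V} (hne : S.Nonempty)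
    (h : ∀ x ∈ S, ∀ y ∈ S, x ≠ y → G.Adj x y) : IsNonseparable G S :=
  ⟨conn_of_clique hne h, fun _ _ hne' => conn_of_clique hne' (by grind)⟩

lemma clique_tri {V : Type} {G : SimpleGraph V} {a b c : V} (h : IsTri G a b c) :
    ∀ x ∈ ({a, b, c} : Set V), ∀ y ∈ ({a, b, c} : Set V), x ≠ y → G.Adj x y := by
  have h1 := h.1
  have h2 := h.2.1
  have h3 := h.2.2
  have h1' := h1.symm
  have h2' := h2.symm
  have h3' := h3.symm
  grind

/-- A nonseparable subset of a triangle cactus cannot cross a gluing vertex, so it lies in one of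
the triangles. -/
lemma Cactus.nonsep_subset {V : Type} {G : SimpleGraph V} {S : Set V} (hS : Cactus G S) :
    ∀ t ⊆ S, IsNonseparable G t → t.Nontrivial → ∃ a b c, IsTri G a b c ∧ t ⊆ {a, b, c} := by
  induction hS with
  | single v =>
    rintro t ht _ ⟨x, hx, y, hy, hxy⟩
    exact (hxy ((ht hx).trans (ht hy).symm)).elim
  | tri a b c h => exact fun t ht _ _ => ⟨a, b, c, h, ht⟩
  | glue A B v _ _ hvA hvB hint hadj ihA ihB =>
    intro t ht hns hnt
    by_cases htA : t ⊆ A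
    · exact ihA t htA hns hnt
    by_cases htB : t ⊆ B
    · exact ihB t htB hns hnt
    exfalso
    obtain ⟨x, hxt, hxA⟩ := Set.not_subset.1 htA
    obtain ⟨y, hyt, hyB⟩ := Set.not_subset.1 htB
    have hxB : x ∈ B := (ht hxt).resolve_left hxA
    have hyA : y ∈ A := (ht hyt).resolve_right hyB
    have hxv : x ≠ v := by grind
    have hyv : y ≠ v := by grind
    have hv := mem_of_conn_glue hint hadj hns.1 ht ⟨y, hyt, hyA⟩ ⟨x, hxt, hxB⟩
    have := mem_of_conn_glue hint hadj (hns.2 v hv ⟨x, hxt, hxv⟩) (Set.sdiff_subset.trans ht)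
      ⟨y, ⟨hyt, hyv⟩, hyA⟩ ⟨x, ⟨hxt, hxv⟩, hxB⟩
    exact this.2 rfl

/-- Every nonseparable subset of `S` with at least two vertices lies in a triangle inside `S`. -/
def TriSat {V : Type} (G : SimpleGraph V) (S : Set V) : Prop :=
  ∀ t ⊆ S, IsNonseparable G t → t.Nontrivial →
    ∃ a b c, IsTri G a b c ∧ {a, b, c} ⊆ S ∧ t ⊆ {a, b, c}

/-- Splitting repeatedly at cut vertices decomposes a connected set satisfying `TriSat` into
triangles. -/
lemma cactus_of_triSat {V : Type} [Finite V] (G : SimpleGraph V) (n : ℕ) :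
    ∀ S : Set V, S.ncard = n → (G.induce S).Connected → TriSat G S → Cactus G S := by
  induction n using Nat.strong_induction_on with
  | _ n ih =>
  intro S hn hS hT
  obtain ⟨r, hr⟩ := conn_nonempty hS
  by_cases hnt : S.Nontrivial
  swap
  · have : S = {r} := (Set.not_nontrivial_iff.1 hnt).eq_singleton_of_mem hr
    rw [this]
    exact .single r
  by_cases hns : IsNonseparable G S
  · obtain ⟨a, b, c, h, h1, h2⟩ := hT S subset_rfl hns hnt
    rw [h2.antisymm h1]
    exact .tri a b c h
  obtain ⟨v, hv, ⟨x, hx⟩, hvc⟩ : ∃ v ∈ S, (S \ {v}).Nonempty ∧ ¬ (G.induce (S \ {v})).Connected := by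
    by_contra! hc
    exact hns ⟨hS, hc⟩
  obtain ⟨D, hDS, hxD, hDc, hcl⟩ := exists_component G hx
  have hDne : ¬ S \ {v} ⊆ D := fun h => hvc (h.antisymm hDS ▸ hDc)
  obtain ⟨y, hy, hyD⟩ := Set.not_subset.1 hDne
  have hBc := conn_diff_component hS hv hDS hcl
  obtain ⟨d, hdD, hdv⟩ : ∃ d ∈ D, G.Adj d v := by
    by_contra! hc
    have := conn_elim hS hx.1 D hxD (by grind) hv
    exact (hDS this).2 rfl
  have hAc := conn_union_of_adj hDc (isTree_singleton G v).1 hdD rfl hdv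
  have hAS : D ∪ {v} ⊆ S := by grind
  have hA : Cactus G (D ∪ {v}) := by
    refine ih _ ?_ _ rfl hAc ?_
    · rw [← hn]
      exact Set.ncard_lt_ncard ⟨hAS, fun h => by have := h hy.1; grind⟩
    · rintro t ht htn ⟨p, hp, q, hq, hpq⟩
      obtain ⟨a, b, c, h, h1, h2⟩ := hT t (ht.trans hAS) htn ⟨p, hp, q, hq, hpq⟩
      refine ⟨a, b, c, h, ?_, h2⟩
      obtain ⟨w, hwt, hwD⟩ : ∃ w ∈ t, w ∈ D := by
        by_cases p = v
        · exact ⟨q, hq, by grind⟩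
        · exact ⟨p, hp, by grind⟩
      intro z hz
      by_cases hzw : z = w
      · exact Or.inl (hzw ▸ hwD)
      by_cases hzv : z = v
      · exact Or.inr hzv
      exact Or.inl (hcl w hwD z ⟨h1 hz, hzv⟩ (clique_tri h w (h2 hwt) z hz (Ne.symm hzw)))
  have hB : Cactus G (S \ D) := by
    refine ih _ ?_ _ rfl hBc ?_
    · rw [← hn]
      exact Set.ncard_lt_ncard ⟨Set.sdiff_subset, fun h => (h hx.1).2 hxD⟩
    · rintro t ht htn ⟨p, hp, q, hq, hpq⟩
      obtain ⟨a, b, c, h, h1, h2⟩ := hT t (ht.trans Set.sdiff_subset) htn ⟨p, hp, q, hq, hpq⟩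
      refine ⟨a, b, c, h, ?_, h2⟩
      obtain ⟨w, hwt, hwv⟩ : ∃ w ∈ t, w ≠ v := by
        by_cases p = v
        · exact ⟨q, hq, by grind⟩
        · exact ⟨p, hp, by grind⟩
      have hwS := ht hwt
      refine fun z hz => ⟨h1 hz, fun hzD => hwS.2 ?_⟩
      by_cases hzw : z = w
      · exact hzw ▸ hzD
      exact hcl z hzD w ⟨hwS.1, hwv⟩ (clique_tri h z hz w (h2 hwt) hzw)
  have e : S = (D ∪ {v}) ∪ S \ D := by ext z; grind
  rw [e]
  exact .glue _ _ v hA hB (by grind) (by grind) (by grind) (by grind)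

lemma cactus_univ_iff {V : Type} [Finite V] [Nontrivial V] {G : SimpleGraph V}
    (hG : G.Connected) :
    Cactus G Set.univ ↔ ∀ s : Set V, IsBlock G s → G.IsClique s ∧ s.ncard = 3 := by
  have hconn : (G.induce Set.univ).Connected := (induceUnivIso G).connected_iff.2 hG
  constructor
  · intro hC s hs
    have hnt : s.Nontrivial := by
      by_contra hnt
      obtain ⟨x, hx⟩ := conn_nonempty hs.1.1
      obtain ⟨y, hy⟩ := exists_ne x
      obtain ⟨z, -, hxz⟩ := exists_adj_of_conn hconn (Set.mem_univ x) (Set.mem_univ y) hy.symm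
      have hsx := (Set.not_nontrivial_iff.1 hnt).eq_singleton_of_mem hx
      have := hs.2 {x, z} (by grind) (nonsep_of_clique ⟨x, by simp⟩ (by
        have := hxz.symm
        grind))
      exact hnt (this ▸ ⟨x, by simp, z, by simp, hxz.ne⟩)
    obtain ⟨a, b, c, h, hsub⟩ := hC.nonsep_subset s (Set.subset_univ _) hs.1 hnt
    have e := hs.2 _ hsub (nonsep_of_clique ⟨a, by simp⟩ (clique_tri h))
    rw [e]
    exact ⟨fun x hx y hy hxy => clique_tri h x hx y hy hxy, ncard_tri h⟩
  · intro h
    refine cactus_of_triSat G _ _ rfl hconn fun t _ htn _ => ?_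
    obtain ⟨s, hts, hs⟩ := Finite.exists_le_maximal (p := IsNonseparable G) htn
    obtain ⟨hcl, hcard⟩ := h s ⟨hs.prop, fun u hsu hu => hsu.antisymm (hs.2 hu hsu)⟩
    obtain ⟨a, b, c, hab, hac, hbc, rfl⟩ := Set.ncard_eq_three.1 hcard
    exact ⟨a, b, c, ⟨hcl (by simp) (by simp) hab, hcl (by simp) (by simp) hac,
      hcl (by simp) (by simp) hbc⟩, Set.subset_univ _, hts⟩

/-! ### The dichotomy for graphs without a `K₄` minor -/

/-- Two adjacent vertices with two common neighbours in a disjoint connected set give a `K₄`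
minor. -/
lemma hasMinor_K4 {V : Type} {G : SimpleGraph V} {H : Set V} {a b c d : V}
    (hH : (G.induce H).Connected) (ha : a ∉ H) (hb : b ∉ H) (hc : c ∈ H) (hd : d ∈ H)
    (hcd : c ≠ d) (hab : G.Adj a b) (hac : G.Adj a c) (hbc : G.Adj b c) (had : G.Adj a d)
    (hbd : G.Adj b d) : HasMinor G (completeGraph (Fin 4)) := by
  -- the fourth branch set is the component of `d` in `H \ {c}`, which has a neighbour of `c`
  obtain ⟨D, hDS, hdD, hDc, hcl⟩ := exists_component G (S := H \ {c}) (x := d) ⟨hd, hcd.symm⟩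
  obtain ⟨e, heD, hec⟩ : ∃ e ∈ D, G.Adj e c := by
    by_contra! hn
    have := conn_elim hH hd D hdD (by grind) hc
    exact (hDS this).2 rfl
  have haD : a ∉ D := fun h => ha (hDS h).1
  have hbD : b ∉ D := fun h => hb (hDS h).1
  have hcD : c ∉ D := fun h => (hDS h).2 rfl
  have n1 := hab.ne
  have n2 := hac.ne
  have n3 := hbc.ne
  refine ⟨![{a}, {b}, {c}, D], ?_, ?_, ?_⟩
  · intro w
    fin_cases w
    · exact (isTree_singleton G a).1
    · exact (isTree_singleton G b).1
    · exact (isTree_singleton G c).1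
    · exact hDc
  · intro w w' hww
    rw [Set.disjoint_left]
    fin_cases w <;> fin_cases w' <;> simp at hww ⊢ <;> grind
  · intro w w' hww
    have hab' := hab.symm
    have hac' := hac.symm
    have hbc' := hbc.symm
    have had' := had.symm
    have hbd' := hbd.symm
    have hec' := hec.symm
    fin_cases w <;> fin_cases w' <;> simp at hww ⊢ <;> grind

/-- A connected set is a triangle cactus unless it is covered by at most half as many trees as it
has vertices. -/
lemma cov_or_cactus {V : Type} [Finite V] {G : SimpleGraph V}
    (hK : ¬ HasMinor G (completeGraph (Fin 4))) (n : ℕ) :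
    ∀ S : Set V, S.ncard = n → (G.induce S).Connected →
      (∃ k, 2 * k ≤ S.ncard ∧ Cov G S k) ∨ Cactus G S := by
  induction n using Nat.strong_induction_on with
  | _ n ih =>
  intro S hn hS
  by_cases hnt : S.Nontrivial
  swap
  · obtain ⟨r, hr⟩ := conn_nonempty hS
    have : S = {r} := (Set.not_nontrivial_iff.1 hnt).eq_singleton_of_mem hr
    rw [this]
    exact Or.inr (.single r)
  obtain ⟨R, hRS, hRn, hRt, hR⟩ := exists_removable G hS hnt
  have hR2 : 2 ≤ R.ncard := Set.one_lt_ncard_iff_nontrivial.2 hRn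
  rcases hR with rfl | hH
  · exact Or.inl ⟨1, hR2, Cov.of_tree hRt⟩
  have hcard : (S \ R).ncard + R.ncard = S.ncard := Set.ncard_sdiff_add_ncard_of_subset hRS
  have hSR : S = (S \ R) ∪ R := (Set.sdiff_union_of_subset hRS).symm
  have hdisj : Disjoint (S \ R) R := Set.disjoint_sdiff_left
  rcases ih _ (by omega) (S \ R) rfl hH with ⟨k, hk, hcov⟩ | hcac
  · left
    refine ⟨k + 1, by omega, ?_⟩
    rw [hSR]
    exact hcov.union (Cov.of_tree hRt) hdisj
  obtain ⟨c₀, hc₀⟩ := conn_nonempty hH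
  by_cases hR3 : 3 ≤ R.ncard
  · left
    obtain ⟨k, hk, hcov⟩ := hcac.cov hc₀
    refine ⟨k + 1, by omega, ?_⟩
    rw [hSR]
    exact hcov.union (Cov.of_tree hRt) hdisj
  -- from here on the removed tree is an edge `ab`
  obtain ⟨a, b, hab, rfl⟩ := Set.ncard_eq_two.1 (show R.ncard = 2 by omega)
  have hadj : G.Adj a b := by
    obtain ⟨z, hz, haz⟩ := exists_adj_of_conn hRt.1 (x := a) (y := b) (by simp) (by simp) hab
    rcases hz with rfl | rfl
    · exact (G.irrefl haz).elim
    · exact haz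
  have ha : a ∉ S \ {a, b} := by grind
  have hb : b ∉ S \ {a, b} := by grind
  -- an induced path `abc` together with a matching of the rest would be a small cover
  have hpath : ∀ c ∈ S \ {a, b}, (G.induce {a, b, c}).IsTree →
      ∃ k, 2 * k ≤ S.ncard ∧ Cov G S k := by
    intro c hc ht
    obtain ⟨k, hk, hcov⟩ := hcac.cov_diff c hc
    refine ⟨k + 1, by omega, ?_⟩
    have e : S = ((S \ {a, b}) \ {c}) ∪ {a, b, c} := by ext z; grind
    rw [e]
    exact hcov.union (Cov.of_tree ht) (Set.disjoint_left.2 (by grind))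
  by_cases hcommon : ∀ c ∈ S \ {a, b}, G.Adj a c ↔ G.Adj b c
  swap
  · left
    push Not at hcommon
    obtain ⟨c, hc, ⟨hac, hbc⟩ | ⟨hac, hbc⟩⟩ := hcommon
    · exact hpath c hc (isTree_path hadj hac hbc)
    · refine hpath c hc ?_
      rw [Set.insert_comm]
      exact isTree_path hadj.symm hbc hac
  right
  obtain ⟨c, hc, hac⟩ : ∃ c ∈ S \ {a, b}, G.Adj a c := by
    by_contra! hcon
    have : S ⊆ {a, b} := conn_elim hS (hRS (by simp : a ∈ ({a, b} : Set V))) {a, b} (by simp) (by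
      intro x hx hxS y hy hxy
      by_contra hyab
      have h1 := hcon y ⟨hy, hyab⟩
      have h2 := hcommon y ⟨hy, hyab⟩
      grind)
    exact hc₀.2 (this hc₀.1)
  have hbc := (hcommon c hc).1 hac
  have huniq : ∀ d ∈ S \ {a, b}, G.Adj a d ∨ G.Adj b d → d = c := by
    intro d hd had
    have had' : G.Adj a d := had.elim id (hcommon d hd).2
    by_contra hdc
    exact hK (hasMinor_K4 hH ha hb hc hd (Ne.symm hdc) hadj hac hbc had' ((hcommon d hd).1 had'))
  have e : S = (S \ {a, b}) ∪ {a, b, c} := by ext z; grind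
  rw [e]
  refine .glue _ _ c hcac (.tri a b c ⟨hadj, hac, hbc⟩) hc (by simp) (by grind) ?_
  intro x hx y hy hxy
  rcases hy with rfl | rfl | rfl
  · exact Or.inl (huniq x hx (Or.inl hxy.symm))
  · exact Or.inl (huniq x hx (Or.inr hxy.symm))
  · exact Or.inr rfl

/-! ### The tree cover number -/

lemma treeCoverNumber_le {V : Type} {G : SimpleGraph V} {k : ℕ} (h : Cov G Set.univ k) :
    treeCoverNumber G ≤ k := by
  obtain ⟨C, h1, h2, h3, h4⟩ := h
  have hle : treeCoverNumber G ≤ C.card :=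
    Nat.sInf_le ⟨C, ⟨fun s hs => (h1 s hs).2, fun v => h2 v trivial,
      fun s hs t ht hst => h3 s hs t ht hst⟩, rfl⟩
  exact hle.trans h4

/-- The infimum defining the tree cover number is attained as soon as some cover exists. -/
lemma cov_treeCoverNumber {V : Type} {G : SimpleGraph V} {k : ℕ} (h : Cov G Set.univ k) :
    Cov G Set.univ (treeCoverNumber G) := by
  obtain ⟨C, h1, h2, h3, h4⟩ := h
  have hne : {n | ∃ C : Finset (Set V), IsTreeCover G C ∧ C.card = n}.Nonempty :=
    ⟨_, C, ⟨fun s hs => (h1 s hs).2, fun v => h2 v trivial,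
      fun s hs t ht hst => h3 s hs t ht hst⟩, rfl⟩
  obtain ⟨C', ⟨k1, k2, k3⟩, k4⟩ := Nat.sInf_mem hne
  exact ⟨C', fun s hs => ⟨Set.subset_univ _, k1 s hs⟩, fun v _ => k2 v,
    fun s hs t ht hst => k3 hs ht hst, k4.le⟩

theorem stmt_10 {V : Type} [Fintype V] (G : SimpleGraph V) (hG : G.Connected)
    (hop : Outerplanar G) (hodd : Odd (Fintype.card V)) (hn : 3 ≤ Fintype.card V) :
    treeCoverNumber G = (Fintype.card V + 1) / 2 ↔
      (∀ s : Set V, IsBlock G s → G.IsClique s ∧ s.ncard = 3) := by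
  have : Nontrivial V := Fintype.one_lt_card_iff_nontrivial.1 (by omega)
  have hcard : (Set.univ : Set V).ncard = Fintype.card V := by
    rw [Set.ncard_univ, Nat.card_eq_fintype_card]
  rw [← cactus_univ_iff hG]
  constructor
  · intro hT
    have hconn : (G.induce Set.univ).Connected := (induceUnivIso G).connected_iff.2 hG
    rcases cov_or_cactus hop.1 _ _ rfl hconn with ⟨k, hk, hcov⟩ | h
    · have := treeCoverNumber_le hcov
      obtain ⟨m, hm⟩ := hodd
      omega
    · exact h
  · intro hC
    obtain ⟨v⟩ := hG.nonempty
    obtain ⟨k, hk, hcov⟩ := hC.cov (Set.mem_univ v)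
    have h1 := treeCoverNumber_le hcov
    have h2 := hC.le_of_cov _ (cov_treeCoverNumber hcov)
    omega
end

section
/- Every graph in the family F (connected block-clique graphs with every block equal to K₃) has an odd number of vertices, and if G ∈ F has n vertices then T(G) = (n+1)/2. -/
/-!
In a graph whose blocks are all triangles, every edge lies in a block and every cycle lies in a
block (an edge and the vertex set of a cycle are nonseparable), so every cycle has length three
and every edge lies in exactly one triangle: two triangles on a common edge would give a
four-cycle. Let `b` be the number of triangles, so that there are `3 * b` edges.

* Deleting one edge from each triangle keeps the graph connected and destroys all cycles. The
  resulting spanning tree has `2 * b` edges, so `n = 2 * b + 1`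
  (`card_eq_two_mul_add_one`).
* For a tree cover with `k` trees, `n - k` is the number of edges with both ends in one tree
  (`IsTreeCover.card_eq`). The trees are induced, so each triangle has at most one such edge,
  whence `k ≥ n - b = b + 1`.
* Keeping exactly one edge of each triangle gives a spanning forest. A path of the forest between
  the ends of an edge of `G` outside the forest would close up to a triangle with two chosen
  edges; so its components are induced trees, and they form a cover with at most `n - b` trees
  (`exists_isTreeCover`).
-/

open SimpleGraph

/-! ### Blocks, cycles and triangles -/

theorem IsNonseparable.exists_isBlock {V : Type} [Finite V] {G : SimpleGraph V} {s : Set V}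
    (hs : IsNonseparable G s) : ∃ t, s ⊆ t ∧ IsBlock G t := by
  obtain ⟨t, hst, ht⟩ := (Set.toFinite {t | IsNonseparable G t}).exists_le_maximal hs
  exact ⟨t, hst, ht.prop, fun u hu hnu => le_antisymm hu (ht.le_of_ge hnu hu)⟩

theorem isNonseparable_pair {V : Type} {G : SimpleGraph V} {u v : V} (h : G.Adj u v) :
    IsNonseparable G {u, v} := by
  refine ⟨induce_pair_connected_of_adj h, ?_⟩
  intro w hw hne
  have hsub : ({u, v} \ {w} : Set V).Subsingleton := by
    rintro a ⟨ha, ha'⟩ b ⟨hb, hb'⟩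
    simp only [Set.mem_insert_iff, Set.mem_singleton_iff] at hw ha hb ha' hb'
    grind
  have := hne.to_subtype
  have := hsub.coe_sort
  exact Connected.of_subsingleton

/-- The vertex set of a cycle is nonseparable: deleting a vertex from a cycle leaves a path. -/
theorem isNonseparable_cycle {V : Type} {G : SimpleGraph V} {u : V} (c : G.Walk u u)
    (hc : c.IsCycle) : IsNonseparable G {v | v ∈ c.support} := by
  classical
  refine ⟨c.connected_induce_support, ?_⟩
  intro v hv _
  have hd := hc.rotate hv
  have hsupp : ({w | w ∈ c.support} \ {v} : Set V) =
      {w | w ∈ (c.rotate v hv).tail.dropLast.support} := by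
    ext w
    have hmem : w ∈ c.support ↔ w ∈ (c.rotate v hv).support := by
      simp
    generalize c.rotate v hv = d at hd hmem
    simp only [Set.mem_sdiff, Set.mem_ofPred_eq, Set.mem_singleton_iff, hmem]
    have hnn := hd.not_nil
    have hlen := hd.three_le_length
    have htn : ¬ d.tail.Nil := by
      rw [Walk.not_nil_iff_lt_length]
      have := Walk.length_tail_add_one hnn
      omega
    have h1 := Walk.cons_support_tail hnn
    have h2 := Walk.support_dropLast_concat htn
    have h3 := hd.isPath_tail.support_nodup
    rw [← h2] at h1 h3
    rw [← h1]
    grind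
  rw [hsupp]
  exact Walk.connected_induce_support _

/-- The vertex set of a cycle lies in a block, which has only three vertices. -/
theorem InF.length_eq_three {V : Type} [Finite V] {G : SimpleGraph V} (hF : InF G) {u : V}
    (c : G.Walk u u) (hc : c.IsCycle) : c.length = 3 := by
  classical
  obtain ⟨t, hst, ht⟩ := (isNonseparable_cycle c hc).exists_isBlock
  have h3 := (hF.2 t ht).2
  have hle : c.support.tail.toFinset.card ≤ t.ncard := by
    rw [← Set.ncard_coe_finset]
    refine Set.ncard_le_ncard ?_ (Set.toFinite t)
    intro x hx
    apply hst
    simpa using List.mem_of_mem_tail (by simpa using hx)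
  rw [List.toFinset_card_of_nodup hc.support_nodup, h3] at hle
  have := hc.three_le_length
  simp at hle
  omega

/-- Every edge of a graph in `F` lies in exactly one triangle: it lies in a block, and two
triangles on a common edge would form a cycle of length four. -/
theorem InF.locallyLinear {V : Type} [Finite V] {G : SimpleGraph V} (hF : InF G) :
    G.LocallyLinear := by
  classical
  have key : ∀ a b c d, G.Adj a b → G.Adj a c → G.Adj b c → G.Adj a d → G.Adj b d → c = d := by
    intro a b c d hab hac hbc had hbd
    by_contra hcd
    -- the cycle `a, c, b, d`
    have hcyc : (Walk.cons hac (Walk.cons hbc.symm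
        (Walk.cons hbd (Walk.cons had.symm Walk.nil)))).IsCycle := by
      have := hab.ne; have := hac.ne; have := hbc.ne; have := had.ne; have := hbd.ne
      simp [Walk.cons_isCycle_iff]
      grind
    simpa using hF.length_eq_three _ hcyc
  refine ⟨?_, ?_⟩
  · intro s hs t ht hst a ha b hb
    by_contra hab
    apply hst
    obtain ⟨ha1, ha2⟩ := ha
    obtain ⟨hb1, hb2⟩ := hb
    simp only [Finset.mem_coe] at ha1 ha2 hb1 hb2
    rw [mem_cliqueSet_iff] at hs ht
    ext c
    have aux : ∀ s t : Finset V, G.IsNClique 3 s → G.IsNClique 3 t → a ∈ s → b ∈ s →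
        a ∈ t → b ∈ t → c ∈ s → c ∈ t := by
      intro s t hs ht ha1 hb1 ha2 hb2 hc
      by_cases hca : c = a
      · exact hca ▸ ha2
      by_cases hcb : c = b
      · exact hcb ▸ hb2
      obtain ⟨d, hd, hdn⟩ := Finset.exists_mem_notMem_of_card_lt_card
        (s := {a, b}) (t := t) (by rw [ht.card_eq, Finset.card_pair hab]; norm_num)
      simp only [Finset.mem_insert, Finset.mem_singleton, not_or] at hdn
      have : c = d := key a b c d (hs.isClique ha1 hb1 hab) (hs.isClique ha1 hc (Ne.symm hca))
        (hs.isClique hb1 hc (Ne.symm hcb)) (ht.isClique ha2 hd (Ne.symm hdn.1))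
        (ht.isClique hb2 hd (Ne.symm hdn.2))
      exact this ▸ hd
    exact ⟨aux s t hs ht ha1 hb1 ha2 hb2, aux t s ht hs ha2 hb2 ha1 hb1⟩
  · intro u v huv
    obtain ⟨t, hst, ht⟩ := (isNonseparable_pair huv).exists_isBlock
    obtain ⟨hcl, h3⟩ := hF.2 t ht
    have hfin := Set.toFinite t
    refine ⟨hfin.toFinset, ⟨by simpa using hcl, ?_⟩, by simpa using hst (by simp),
      by simpa using hst (by simp)⟩
    rw [← h3, Set.ncard_eq_toFinset_card t hfin]

/-! ### Edge sets meeting each triangle once -/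

/-- In a locally linear graph, a set of edges containing at most one edge of each triangle has
at most as many edges as there are triangles. -/
theorem ncard_le_of_subset_edgeSet {V : Type} [Fintype V] [DecidableEq V] {G : SimpleGraph V}
    [DecidableRel G.Adj] (hG : G.LocallyLinear) {I : Set (Sym2 V)} (hI : I ⊆ G.edgeSet)
    (h : ∀ x y z, G.Adj x y → G.Adj y z → G.Adj x z → s(x, y) ∈ I → s(x, z) ∉ I) :
    I.ncard ≤ (G.cliqueFinset 3).card := by
  have hex : ∀ e ∈ I, ∃ t, G.IsNClique 3 t ∧ ∀ x ∈ e, x ∈ t := by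
    intro e he
    induction e with
    | _ a b =>
      obtain ⟨t, ht, ha, hb⟩ := hG.2 (hI he)
      exact ⟨t, ht, by simp [ha, hb]⟩
  choose! f hf hf' using hex
  rw [← Set.ncard_coe_finset]
  refine Set.ncard_le_ncard_of_injOn f (fun e he => by simpa using hf e he) ?_ (Set.toFinite _)
  intro e he e' he' hee
  have hcl := (hf e he).isClique
  have h1 := hf' e he
  have h2 := hf' e' he'
  have hcard := (hf e he).card_eq
  rw [← hee] at h2
  generalize f e = t at hcl h1 h2 hcard
  by_contra hne
  induction e with
  | _ a b =>
  induction e' with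
  | _ c d =>
    have hab : G.Adj a b := hI he
    have hcd : G.Adj c d := hI he'
    simp only [Sym2.mem_iff, forall_eq_or_imp, forall_eq] at h1 h2
    -- two pairs inside a set of three points meet
    have hmeet : a = c ∨ a = d ∨ b = c ∨ b = d := by
      by_contra! hcon
      have : ({a, b, c, d} : Finset V).card ≤ 3 := by
        rw [← hcard]
        apply Finset.card_le_card
        simp [Finset.insert_subset_iff, h1, h2]
      have h4 : ({a, b, c, d} : Finset V).card = 4 := by
        have := hab.ne; have := hcd.ne
        exact Finset.card_eq_four.2 ⟨a, b, c, d, by grind⟩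
      omega
    have fin : ∀ x y z, x ∈ t → y ∈ t → z ∈ t → G.Adj x y → G.Adj x z → s(x, y) ∈ I →
        s(x, z) ∈ I → s(x, y) = s(x, z) := by
      intro x y z hx hy hz hxy hxz h1 h2
      by_contra hyz
      exact h x y z hxy (hcl hy hz (fun h => hyz (h ▸ rfl))) hxz h1 h2
    rcases hmeet with rfl | rfl | rfl | rfl
    · exact hne (fin a b d h1.1 h1.2 h2.2 hab hcd he he')
    · rw [Sym2.eq_swap (a := c)] at hne he'
      exact hne (fin a b c h1.1 h1.2 h2.1 hab hcd.symm he he')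
    · rw [Sym2.eq_swap (a := a)] at hne he
      exact hne (fin b a d h1.2 h1.1 h2.2 hab.symm hcd he he')
    · rw [Sym2.eq_swap (a := a)] at hne he
      rw [Sym2.eq_swap (a := c)] at hne he'
      exact hne (fin b a c h1.2 h1.1 h2.1 hab.symm hcd.symm he he')

/-- A locally linear graph has a set `S` of edges containing exactly one edge of each triangle. -/
theorem exists_transversal {V : Type} [Fintype V] [DecidableEq V] [Nonempty V]
    {G : SimpleGraph V} [DecidableRel G.Adj] (hG : G.LocallyLinear) :
    ∃ S : Set (Sym2 V), S ⊆ G.edgeSet ∧ S.ncard = (G.cliqueFinset 3).card ∧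
      ∀ x y z, G.Adj x y → G.Adj y z → G.Adj x z →
        (s(x, y) ∈ S → s(x, z) ∉ S) ∧ (s(x, y) ∈ S ∨ s(y, z) ∈ S ∨ s(x, z) ∈ S) := by
  have hex : ∀ t, G.IsNClique 3 t → ∃ e, e ∈ G.edgeSet ∧ ∀ x ∈ e, x ∈ t := by
    intro t ht
    obtain ⟨a, b, c, hab, -, -, rfl⟩ := is3Clique_iff.1 ht
    exact ⟨s(a, b), hab, by simp⟩
  have : Nonempty (Sym2 V) := Nonempty.map (fun v => s(v, v)) ‹_›
  choose! f hf hf' using hex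
  have huniq : ∀ t t', G.IsNClique 3 t → G.IsNClique 3 t' → (∀ x ∈ f t, x ∈ t') → t = t' := by
    intro t t' ht ht' h
    by_contra hne
    have hsub := hG.1 (mem_cliqueSet_iff.2 ht) (mem_cliqueSet_iff.2 ht') hne
    have h1 := hf t ht
    have h2 := hf' t ht
    induction hfe : f t with
    | _ a b =>
      rw [hfe] at h h1 h2
      exact (show G.Adj a b from h1).ne (hsub ⟨h2 a (by simp), h a (by simp)⟩
        ⟨h2 b (by simp), h b (by simp)⟩)
  refine ⟨f '' {t | G.IsNClique 3 t}, ?_, ?_, ?_⟩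
  · rintro _ ⟨t, ht, rfl⟩
    exact hf t ht
  · rw [Set.InjOn.ncard_image, ← Set.ncard_coe_finset]
    · congr 1; ext; simp
    · intro t ht t' ht' h
      exact huniq t t' ht ht' (h ▸ hf' t' ht')
  · intro x y z hxy hyz hxz
    have ht : G.IsNClique 3 {x, y, z} := is3Clique_iff.2 ⟨x, y, z, hxy, hxz, hyz, rfl⟩
    refine ⟨?_, ?_⟩
    · rintro ⟨t, ht1, h1⟩ ⟨t', ht2, h2⟩
      have e1 := huniq t _ ht1 ht (by rw [h1]; simp)
      have e2 := huniq t' _ ht2 ht (by rw [h2]; simp)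
      rw [e1.trans e2.symm, h2] at h1
      have := hyz.ne
      simp at h1
      grind
    · have h1 := hf _ ht
      have h2 := hf' _ ht
      have hm : f {x, y, z} ∈ f '' {t | G.IsNClique 3 t} := ⟨_, ht, rfl⟩
      induction hfe : f {x, y, z} with
      | _ a b =>
        rw [hfe] at h1 h2 hm
        have hab := (show G.Adj a b from h1).ne
        simp at h2
        obtain ⟨rfl | rfl | rfl, rfl | rfl | rfl⟩ := h2 <;>
          first
          | exact absurd rfl hab
          | exact Or.inl hm
          | exact Or.inr (Or.inl hm)
          | exact Or.inr (Or.inr hm)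
          | exact Or.inl (Sym2.eq_swap ▸ hm)
          | exact Or.inr (Or.inl (Sym2.eq_swap ▸ hm))
          | exact Or.inr (Or.inr (Sym2.eq_swap ▸ hm))

theorem exists_adj_of_length_eq_three {V : Type} {G : SimpleGraph V} {u : V} (c : G.Walk u u)
    (hc : c.length = 3) : ∃ v w, G.Adj u v ∧ G.Adj v w ∧ G.Adj u w := by
  match c, hc with
  | .cons h1 (.cons h2 (.cons h3 .nil)), _ => exact ⟨_, _, h1, h2, h3.symm⟩

/-! ### Lower bound for tree covers -/

/-- A tree on `k` vertices has `k - 1` edges; summed over the trees of a cover, the number of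
vertices is the number of trees plus the number of edges having both ends in one tree. -/
theorem IsTreeCover.card_eq {V : Type} [Fintype V] {G : SimpleGraph V} {C : Finset (Set V)}
    (hC : IsTreeCover G C) :
    Fintype.card V = C.card + {e ∈ G.edgeSet | ∃ s ∈ C, ∀ x ∈ e, x ∈ s}.ncard := by
  classical
  obtain ⟨htree, hcov, hdisj⟩ := hC
  have hV : Fintype.card V = ∑ s ∈ C, s.toFinset.card := by
    rw [← Finset.card_biUnion]
    · rw [← Finset.card_univ]
      congr 1
      ext v
      simpa using hcov v
    · intro s hs t ht hst
      simpa [Function.onFun, Set.disjoint_toFinset] using hdisj hs ht hst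
  have hE : {e ∈ G.edgeSet | ∃ s ∈ C, ∀ x ∈ e, x ∈ s}.ncard =
      ∑ s ∈ C, (G.edgeFinset.filter fun e => ∀ x ∈ e, x ∈ s).card := by
    rw [← Finset.card_biUnion, ← Set.ncard_coe_finset]
    · congr 1
      ext e
      simp
    · intro s hs t ht hst
      rw [Function.onFun, Finset.disjoint_left]
      intro e he he'
      simp only [Finset.mem_filter] at he he'
      induction e with
      | _ a b =>
        exact Set.disjoint_left.1 (hdisj hs ht hst) (he.2 a (by simp)) (he'.2 a (by simp))
  rw [hV, hE, Finset.card_eq_sum_ones, ← Finset.sum_add_distrib]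
  refine Finset.sum_congr rfl fun s hs => ?_
  have h1 := (htree s hs).card_edgeFinset
  rw [Set.toFinset_card, ← h1, add_comm]
  congr 1
  refine Finset.card_bij (fun e _ => e.map Subtype.val) ?_ ?_ ?_
  · intro e he
    induction e with
    | _ a b =>
      simp at he
      simp [he]
  · intro e _ e' _ h
    exact Sym2.map.injective Subtype.val_injective h
  · intro e he
    induction e with
    | _ a b =>
      simp at he
      exact ⟨s(⟨a, he.2.1⟩, ⟨b, he.2.2⟩), by simpa using he.1, rfl⟩

/-- No induced tree contains a triangle, so a tree cover uses at most one edge per triangle. -/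
theorem IsTreeCover.card_le {V : Type} [Fintype V] [DecidableEq V] {G : SimpleGraph V}
    [DecidableRel G.Adj] (hG : G.LocallyLinear) {C : Finset (Set V)} (hC : IsTreeCover G C) :
    Fintype.card V ≤ C.card + (G.cliqueFinset 3).card := by
  rw [hC.card_eq]
  gcongr
  refine ncard_le_of_subset_edgeSet hG (fun e he => he.1) ?_
  rintro x y z hxy hyz hxz ⟨-, s, hs, h1⟩ ⟨-, t, ht, h2⟩
  simp only [Sym2.mem_iff, forall_eq_or_imp, forall_eq] at h1 h2
  have hst : s = t := by
    by_contra hne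
    exact Set.disjoint_left.1 (hC.2.2 hs ht hne) h1.1 h2.1
  subst hst
  have hcf := (hC.1 s hs).isAcyclic.cliqueFree le_rfl
  exact hcf {⟨x, h1.1⟩, ⟨y, h1.2⟩, ⟨z, h2.2⟩}
    (is3Clique_iff.2 ⟨_, _, _, by simpa using hxy, by simpa using hxz, by simpa using hyz, rfl⟩)

/-! ### Number of vertices and the optimal cover -/

/-- Deleting one edge from each triangle leaves a spanning tree, which has two edges per
triangle. -/
theorem card_eq_two_mul_add_one {V : Type} [Fintype V] [DecidableEq V] {G : SimpleGraph V}
    [DecidableRel G.Adj] (hconn : G.Connected) (hG : G.LocallyLinear)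
    (hcyc : ∀ (u : V) (c : G.Walk u u), c.IsCycle → c.length = 3) :
    Fintype.card V = 2 * (G.cliqueFinset 3).card + 1 := by
  classical
  have := hconn.nonempty
  obtain ⟨S, hS, hScard, hST⟩ := exists_transversal hG
  have htree : (G.deleteEdges S).IsTree := by
    refine ⟨?_, ?_⟩
    · have hstep : ∀ u v, G.Adj u v → (G.deleteEdges S).Reachable u v := by
        intro u v huv
        by_cases huvS : s(u, v) ∈ S
        · obtain ⟨t, ht, hu, hv⟩ := hG.2 huv
          obtain ⟨w, hw, hwn⟩ := Finset.exists_mem_notMem_of_card_lt_card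
            (s := {u, v}) (t := t) (by rw [ht.card_eq, Finset.card_pair huv.ne]; norm_num)
          simp only [Finset.mem_insert, Finset.mem_singleton, not_or] at hwn
          have huw : G.Adj u w := ht.isClique hu hw (Ne.symm hwn.1)
          have hvw : G.Adj v w := ht.isClique hv hw (Ne.symm hwn.2)
          have h1 : (G.deleteEdges S).Adj u w :=
            deleteEdges_adj.2 ⟨huw, (hST u v w huv hvw huw).1 huvS⟩
          have h2 : (G.deleteEdges S).Adj v w :=
            deleteEdges_adj.2 ⟨hvw, (hST v u w huv.symm huw hvw).1 (Sym2.eq_swap ▸ huvS)⟩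
          exact h1.reachable.trans h2.reachable.symm
        · exact (deleteEdges_adj.2 ⟨huv, huvS⟩ : (G.deleteEdges S).Adj u v).reachable
      refine { preconnected := fun u v => ?_, nonempty := this }
      obtain ⟨p⟩ := hconn u v
      induction p with
      | nil => exact Reachable.rfl
      | cons h _ ih => exact (hstep _ _ h).trans ih
    · intro u c hc
      have h3 := hcyc u (c.mapLe (deleteEdges_le S)) (hc.mapLe _)
      obtain ⟨v, w, h1, h2, h3⟩ := exists_adj_of_length_eq_three c (by simpa using h3)
      rw [deleteEdges_adj] at h1 h2 h3
      rcases (hST u v w h1.1 h2.1 h3.1).2 with h | h | h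
      exacts [h1.2 h, h2.2 h, h3.2 h]
  have h1 := htree.card_edgeFinset
  have h2 := hG.card_edgeFinset
  have h3 : (G.deleteEdges S).edgeFinset.card + S.ncard = G.edgeFinset.card := by
    rw [← Set.ncard_coe_finset, ← Set.ncard_coe_finset, coe_edgeFinset, coe_edgeFinset,
      edgeSet_deleteEdges, Set.ncard_sdiff_add_ncard_of_subset hS]
  omega

/-- Keeping exactly one edge of each triangle gives a spanning forest whose components are
induced trees. -/
theorem exists_isTreeCover {V : Type} [Fintype V] [DecidableEq V] [Nonempty V]
    {G : SimpleGraph V} [DecidableRel G.Adj] (hG : G.LocallyLinear)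
    (hcyc : ∀ (u : V) (c : G.Walk u u), c.IsCycle → c.length = 3) :
    ∃ C, IsTreeCover G C ∧ C.card + (G.cliqueFinset 3).card ≤ Fintype.card V := by
  classical
  obtain ⟨S, hS, hScard, hST⟩ := exists_transversal hG
  let F : SimpleGraph V := fromEdgeSet S
  have hFadj : ∀ x y, F.Adj x y ↔ s(x, y) ∈ S := by
    intro x y
    refine ⟨fun h => (fromEdgeSet_adj S |>.1 h).1, fun h => (fromEdgeSet_adj S).2 ⟨h, ?_⟩⟩
    exact (show G.Adj x y from hS h).ne
  have hFG : F ≤ G := fun x y h => hS ((hFadj x y).1 h)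
  -- a path of `F` joining the ends of an edge of `G` outside `F` would close up to a cycle of
  -- `G`, hence to a triangle with two edges in `F`
  have hind : ∀ x y, F.Reachable x y → G.Adj x y → F.Adj x y := by
    intro x y hr hxy
    by_contra hn
    obtain ⟨p, hp⟩ := hr.exists_isPath
    have hc : (Walk.cons hxy.symm (p.mapLe hFG)).IsCycle := by
      rw [Walk.cons_isCycle_iff]
      refine ⟨hp.mapLe hFG, fun he => hn ?_⟩
      rw [Walk.edges_mapLe_eq_edges] at he
      exact (p.adj_of_mem_edges he).symm
    have h3 := hcyc _ _ hc
    have h2 : p.length = 2 := by simpa using h3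
    match p, h2 with
    | .cons (v := w) h1 (.cons h2 .nil), _ =>
      refine (hST w x y (hFG h1).symm hxy (hFG h2)).1 ?_ ((hFadj _ _).1 h2)
      exact (hFadj _ _).1 h1.symm
  refine ⟨Finset.univ.image (fun c : F.ConnectedComponent => c.supp), ?_⟩
  have hcover : IsTreeCover G (Finset.univ.image (fun c : F.ConnectedComponent => c.supp)) := by
    refine ⟨?_, ?_, ?_⟩
    · intro s hs
      obtain ⟨c, -, rfl⟩ := Finset.mem_image.1 hs
      refine ⟨c.connected_toSimpleGraph.mono (fun a b h => hFG h), ?_⟩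
      intro u p hp
      have h3 := hcyc _ (p.map (Embedding.induce c.supp).toHom)
        (hp.map (Embedding.induce (G := G) c.supp).injective)
      obtain ⟨v, w, h1, h2, h3⟩ := exists_adj_of_length_eq_three p
        ((Walk.length_map _ _).symm.trans h3)
      have hF : ∀ a b : c.supp, (G.induce c.supp).Adj a b → s(a.1, b.1) ∈ S := fun a b h =>
        (hFadj _ _).1 (hind _ _ (c.reachable_of_mem_supp a.2 b.2) h)
      exact (hST u v w h1 h2 h3).1 (hF _ _ h1) (hF _ _ h3)
    · intro v
      exact ⟨_, Finset.mem_image_of_mem _ (Finset.mem_univ (F.connectedComponentMk v)), rfl⟩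
    · rintro s hs t ht hst
      simp only [Finset.coe_image, Finset.coe_univ, Set.image_univ, Set.mem_range] at hs ht
      obtain ⟨c, rfl⟩ := hs
      obtain ⟨d, rfl⟩ := ht
      exact pairwise_disjoint_supp_connectedComponent F (fun h => hst (h ▸ rfl))
  refine ⟨hcover, ?_⟩
  rw [hcover.card_eq, ← hScard]
  gcongr
  · exact Set.toFinite _
  intro e he
  refine ⟨hS he, ?_⟩
  induction e with
  | _ a b =>
    refine ⟨_, Finset.mem_image_of_mem _ (Finset.mem_univ (F.connectedComponentMk a)), ?_⟩
    have : F.Adj a b := (hFadj a b).2 he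
    simp [this.reachable.symm]

theorem stmt_11 {V : Type} [Fintype V] (G : SimpleGraph V) (hF : InF G) :
    Odd (Fintype.card V) ∧ treeCoverNumber G = (Fintype.card V + 1) / 2 := by
  classical
  have := hF.1.nonempty
  have hG := hF.locallyLinear
  have hn := card_eq_two_mul_add_one hF.1 hG fun _ => hF.length_eq_three
  obtain ⟨C, hC, hCcard⟩ := exists_isTreeCover hG fun _ => hF.length_eq_three
  refine ⟨⟨_, hn⟩, ?_⟩
  have hle : treeCoverNumber G ≤ C.card := Nat.sInf_le ⟨C, hC, rfl⟩
  refine le_antisymm (by omega) ?_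
  refine le_csInf ⟨_, C, hC, rfl⟩ ?_
  rintro _ ⟨D, hD, rfl⟩
  have := hD.card_le hG
  omega
end
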